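/- Let ℛ be a Rauzy class of irreducible permutations of {1,…,m} and let 𝒫: ℛ × Δ_{m−1} → ℛ × Δ_{m−1} be the normalized Rauzy induction map on the space of interval exchange transformations. Then there exists a σ-finite measure μ_ℛ on ℛ × Δ_{m−1} which is 𝒫-invariant, equivalent to the product of counting measure and Lebesgue measure on the simplex, conservative and ergodic. (Veech, Masur, 1982) -/

import Mathlib

open MeasureTheory

/-- The Rauzy operation `a` on (monodromy) permutations of `{0, …, d}`:
`aπ(j) = πj` if `πj ≤ πm`; `πm + 1` if `πj = m`; `πj + 1` otherwise (`m` the last index). -/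
def rauzyA (d : ℕ) (π : Fin (d + 1) → Fin (d + 1)) : Fin (d + 1) → Fin (d + 1) := fun j =>
  if π j ≤ π (Fin.last d) then π j
  else if π j = Fin.last d then π (Fin.last d) + 1
  else π j + 1

/-- The Rauzy operation `b` on permutations of `{0, …, d}`: with `k = π⁻¹(m)`,
`bπ(j) = πj` for `j ≤ k`, `bπ(k+1) = πm`, and `bπ(j) = π(j-1)` for `j > k + 1`. -/
noncomputable def rauzyB (d : ℕ) (π : Fin (d + 1) → Fin (d + 1)) :
    Fin (d + 1) → Fin (d + 1) := fun j =>
  let k := Function.invFun π (Fin.last d)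
  if j ≤ k then π j else if j = k + 1 then π (Fin.last d) else π (j - 1)

/-- `π` is an irreducible permutation: no strict initial segment `{0, …, k}`, `k < d`,
is invariant. -/
def IsIrreduciblePerm (d : ℕ) (π : Fin (d + 1) → Fin (d + 1)) : Prop :=
  ∀ k : Fin (d + 1), (∀ j, j ≤ k → π j ≤ k) → k = Fin.last d

/-- The Rauzy class of `π₀`: the orbit of `π₀` under the two Rauzy operations. -/
inductive MemRauzyClass (d : ℕ) (π₀ : Fin (d + 1) → Fin (d + 1)) :
    (Fin (d + 1) → Fin (d + 1)) → Prop
  | base : MemRauzyClass d π₀ π₀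
  | opA {π} : MemRauzyClass d π₀ π → MemRauzyClass d π₀ (rauzyA d π)
  | opB {π} : MemRauzyClass d π₀ π → MemRauzyClass d π₀ (rauzyB d π)

/-- The open standard simplex `Δ_{m-1}` of positive probability vectors. -/
def openSimplex (d : ℕ) : Set (Fin (d + 1) → ℝ) :=
  {l | (∀ i, 0 < l i) ∧ ∑ i, l i = 1}

/-- The normalized Rauzy induction map `𝒫` on pairs `(π, λ)`: compare the lengths of the
last interval on top (`λ_m`) and on the bottom (`λ_k`, `k = π⁻¹ m`), induce on the shorter
complement, and renormalize to total length one.  (It is the identity junk value on the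
null set `λ_m = λ_k`.) -/
noncomputable def rauzyInduction (d : ℕ) :
    ((Fin (d + 1) → Fin (d + 1)) × (Fin (d + 1) → ℝ)) →
      ((Fin (d + 1) → Fin (d + 1)) × (Fin (d + 1) → ℝ)) := fun p =>
  let π := p.1
  let lam := p.2
  let m := Fin.last d
  let k := Function.invFun π m
  if lam k < lam m then
    (rauzyA d π, fun i => Function.update lam m (lam m - lam k) i / (1 - lam k))
  else if lam m < lam k then
    (rauzyB d π, fun j =>
      (if j ≤ k then (if j = k then lam k - lam m else lam j)
        else if j = k + 1 then lam m else lam (j - 1)) / (1 - lam m))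
  else p

/-- The reference measure: counting measure on the Rauzy class times Lebesgue measure on
the simplex (realized through the chart forgetting the last coordinate). -/
noncomputable def rauzyRefMeasure (d : ℕ) (π₀ : Fin (d + 1) → Fin (d + 1)) :
    Measure ((Fin (d + 1) → Fin (d + 1)) × (Fin (d + 1) → ℝ)) :=
  (Measure.map
      (fun p : (Fin (d + 1) → Fin (d + 1)) × (Fin d → ℝ) =>
        (p.1, Fin.snoc p.2 (1 - ∑ i, p.2 i)))
      (Measure.count.prod volume)).restrict
    ({π | MemRauzyClass d π₀ π} ×ˢ openSimplex d)

namespace VM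
variable {d : ℕ}

/-- position of the letter which is last in the bottom row -/
noncomputable def kk (π : Fin (d + 1) → Fin (d + 1)) : Fin (d + 1) :=
  Function.invFun π (Fin.last d)

theorem add_one_val {j : Fin (d + 1)} (h : j ≠ Fin.last d) : ((j + 1 : Fin (d + 1)) : ℕ) = j + 1 := by
  rw [Fin.val_add_one, if_neg h]

theorem sub_one_val {j : Fin (d + 1)} (h : j ≠ 0) : ((j - 1 : Fin (d + 1)) : ℕ) = j - 1 := by
  rw [Fin.val_sub_one_of_ne_zero h]

/-- relabelling permutation of the bottom operation -/
def sgB (k : Fin (d + 1)) : Equiv.Perm (Fin (d + 1)) where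
  toFun j := if j ≤ k then j else if j = k + 1 then Fin.last d else j - 1
  invFun j := if j ≤ k then j else if j = Fin.last d then k + 1 else j + 1
  left_inv j := by
    by_cases h1 : j ≤ k
    · simp [h1]
    · have hk : k ≠ Fin.last d := by rintro rfl; exact h1 (Fin.le_last j)
      have hj0 : j ≠ 0 := by rintro rfl; exact h1 (Fin.zero_le k)
      have e1 := add_one_val hk
      have e2 := sub_one_val hj0
      by_cases h2 : j = k + 1
      · have h3 : ¬ (Fin.last d ≤ k) := fun h => hk (le_antisymm (Fin.le_last k) h)
        beta_reduce
        rw [if_neg h1, if_pos h2, if_neg h3, if_pos rfl, h2]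
      · have h3 : ¬ (j - 1 ≤ k) := by
          rw [Fin.le_def, e2]; rw [Fin.le_def] at h1
          have : (j : ℕ) ≠ k + 1 := fun h => h2 (Fin.ext (by rw [e1, h]))
          omega
        have h4 : j - 1 ≠ Fin.last d := by
          intro h; have := congrArg Fin.val h; rw [e2] at this
          have := j.2; have : (j:ℕ) ≠ 0 := fun h => hj0 (Fin.ext h)
          simp at *; omega
        simp [h1, h2, h3, h4]
  right_inv j := by
    by_cases h1 : j ≤ k
    · simp [h1]
    · have hk : k ≠ Fin.last d := by rintro rfl; exact h1 (Fin.le_last j)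
      have e1 := add_one_val hk
      by_cases h2 : j = Fin.last d
      · have h3 : ¬ (k + 1 ≤ k) := by rw [Fin.le_def, e1]; omega
        beta_reduce
        rw [if_neg h1, if_pos h2, if_neg h3, if_pos rfl, h2]
      · have e2 := add_one_val h2
        have h3 : ¬ (j + 1 ≤ k) := by
          rw [Fin.le_def, e2]; rw [Fin.le_def] at h1; omega
        have h4 : j + 1 ≠ k + 1 := by
          intro h; exact h1 (add_right_cancel h).le
        simp [h1, h2, h3]
        intro h; exact absurd h.le h1

/-- uniform notation for one Rauzy step; `true` is type `a`, `false` is type `b` -/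
noncomputable def st (c : Bool) (π : Fin (d + 1) → Fin (d + 1)) : Fin (d + 1) → Fin (d + 1) :=
  cond c (rauzyA d π) (rauzyB d π)
/-- winner -/
noncomputable def wn (c : Bool) (π : Fin (d + 1) → Fin (d + 1)) : Fin (d + 1) :=
  cond c (Fin.last d) (kk π)
/-- loser -/
noncomputable def ls (c : Bool) (π : Fin (d + 1) → Fin (d + 1)) : Fin (d + 1) :=
  cond c (kk π) (Fin.last d)
/-- relabelling -/
noncomputable def sg (c : Bool) (π : Fin (d + 1) → Fin (d + 1)) : Equiv.Perm (Fin (d + 1)) :=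
  cond c 1 (sgB (kk π))

/-- irreducible bijections -/
def Good (π : Fin (d + 1) → Fin (d + 1)) : Prop :=
  Function.Bijective π ∧ IsIrreduciblePerm d π

theorem kk_spec {π : Fin (d + 1) → Fin (d + 1)} (h : Good π) : π (kk π) = Fin.last d :=
  Function.invFun_eq (h.1.2 _)

theorem kk_eq {π : Fin (d + 1) → Fin (d + 1)} (h : Function.Injective π) {k} (hk : π k = Fin.last d) :
    kk π = k := by
  apply h; rw [hk]; exact Function.invFun_eq ⟨k, hk⟩

theorem pi_last_ne (hd : 0 < d) {π : Fin (d + 1) → Fin (d + 1)} (h : Good π) :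
    π (Fin.last d) ≠ Fin.last d := by
  intro e
  have := h.2 ⟨d - 1, by omega⟩ (fun j hj => by
    have h1 : π j ≠ Fin.last d := by
      intro h2
      have := h.1.1 (h2.trans e.symm)
      rw [this] at hj
      simp [Fin.le_def] at hj; omega
    rw [Fin.le_def]
    have := (π j).2
    have h2 : (π j : ℕ) ≠ d := fun h => h1 (Fin.ext h)
    simp; omega)
  have := congrArg Fin.val this
  simp at this; omega

theorem kk_ne (hd : 0 < d) {π : Fin (d + 1) → Fin (d + 1)} (h : Good π) : kk π ≠ Fin.last d := by
  intro e
  exact pi_last_ne hd h (by conv_lhs => rw [← e]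
                            exact kk_spec h)

theorem rauzyB_eq (π : Fin (d + 1) → Fin (d + 1)) : rauzyB d π = π ∘ sgB (kk π) := by
  funext j
  change (if j ≤ kk π then π j else if j = kk π + 1 then π (Fin.last d) else π (j - 1)) =
    π (if j ≤ kk π then j else if j = kk π + 1 then Fin.last d else j - 1)
  split_ifs <;> rfl

theorem sgB_self (k : Fin (d + 1)) : sgB k k = k := by simp [sgB]

theorem kk_rauzyB {π : Fin (d + 1) → Fin (d + 1)} (h : Good π) : kk (rauzyB d π) = kk π := by
  apply kk_eq
  · rw [rauzyB_eq]; exact h.1.1.comp (Equiv.injective _)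
  · rw [rauzyB_eq]; simp [sgB_self, kk_spec h]

theorem sg_wn (c : Bool) {π : Fin (d + 1) → Fin (d + 1)} (h : Good π) :
    sg c π (wn c (st c π)) = wn c π := by
  cases c
  · simp [sg, wn, st, kk_rauzyB h, sgB_self]
  · simp [sg, wn]

theorem rauzyA_inj {π : Fin (d + 1) → Fin (d + 1)} (h : Function.Injective π) :
    Function.Injective (rauzyA d π) := by
  intro i j hij
  apply h
  have hv := congrArg Fin.val hij
  simp only [rauzyA] at hv
  rcases eq_or_ne (π i) (Fin.last d) with hi | hi <;> rcases eq_or_ne (π j) (Fin.last d) with hj | hj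
  · rw [hi, hj]
  all_goals
    rcases eq_or_ne (π (Fin.last d)) (Fin.last d) with hl | hl
  all_goals
    first
    | have ei := add_one_val hi
    | skip
    first
    | have ej := add_one_val hj
    | skip
    first
    | have el := add_one_val hl
    | skip
  all_goals
    apply Fin.ext
    have b1 := (π i).2
    have b2 := (π j).2
    have b3 := (π (Fin.last d)).2
    simp only [Fin.ext_iff, Fin.le_def, Fin.val_last] at *
    split_ifs at hv <;> simp_all <;> omega

theorem rauzyA_last (π : Fin (d + 1) → Fin (d + 1)) : rauzyA d π (Fin.last d) = π (Fin.last d) := by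
  simp [rauzyA]

theorem good_A (hd : 0 < d) {π : Fin (d + 1) → Fin (d + 1)} (h : Good π) : Good (rauzyA d π) := by
  have hinj := rauzyA_inj h.1.1
  refine ⟨Finite.injective_iff_bijective.1 hinj, fun k hk => ?_⟩
  by_contra hne
  have hl := pi_last_ne hd h
  have el := add_one_val hl
  rcases le_or_gt k (π (Fin.last d)) with hkl | hkl
  · apply hne
    apply h.2
    intro j hj
    have h1 := hk j hj
    by_cases h2 : π j ≤ π (Fin.last d)
    · simpa [rauzyA, h2] using h1
    · exfalso
      by_cases h3 : π j = Fin.last d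
      · simp only [rauzyA, h3, if_true] at h1
        rw [Fin.le_def] at h1 hkl
        split_ifs at h1 <;> first | omega | simp_all
      · have e3 := add_one_val h3
        simp only [rauzyA, h2, h3, if_false] at h1
        rw [Fin.le_def] at h1 hkl h2
        omega
  · have hmap : Set.MapsTo (rauzyA d π) (Set.Iic k) (Set.Iic k) := fun j hj => hk j hj
    have hs : Set.SurjOn (rauzyA d π) (Set.Iic k) (Set.Iic k) := by
      have := Finset.surjOn_of_injOn_of_card_le (s := Finset.Iic k) (t := Finset.Iic k)
        (rauzyA d π) (by simpa using hmap) hinj.injOn le_rfl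
      simpa using this
    obtain ⟨j, hj, hj2⟩ := hs (show π (Fin.last d) ∈ Set.Iic k from hkl.le)
    have : j = Fin.last d := hinj (hj2.trans (rauzyA_last π).symm)
    rw [this] at hj
    exact hne (le_antisymm (Fin.le_last k) hj)

theorem good_B {π : Fin (d + 1) → Fin (d + 1)} (h : Good π) : Good (rauzyB d π) := by
  refine ⟨by rw [rauzyB_eq]; exact h.1.comp (Equiv.bijective _), fun k hk => ?_⟩
  by_contra hne
  apply hne
  have h1 : k < kk π := by
    by_contra hlt
    have := hk (kk π) (not_lt.1 hlt)
    rw [rauzyB_eq] at this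
    simp only [Function.comp, sgB_self, kk_spec h] at this
    exact hne (le_antisymm (Fin.le_last k) this)
  apply h.2
  intro j hj
  have := hk j hj
  rw [rauzyB_eq] at this
  simpa [sgB, (hj.trans h1.le)] using this

theorem good_st (hd : 0 < d) (c : Bool) {π : Fin (d + 1) → Fin (d + 1)} (h : Good π) :
    Good (st c π) := by
  cases c
  · exact good_B h
  · exact good_A hd h

theorem mem_st {π₀ π : Fin (d + 1) → Fin (d + 1)} (c : Bool) (h : MemRauzyClass d π₀ π) :
    MemRauzyClass d π₀ (st c π) := by
  cases c
  · exact h.opB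
  · exact h.opA

theorem mem_good (hd : 0 < d) {π₀ π : Fin (d + 1) → Fin (d + 1)} (h0 : Good π₀)
    (h : MemRauzyClass d π₀ π) : Good π := by
  induction h with
  | base => exact h0
  | opA _ ih => exact good_A hd ih
  | opB _ ih => exact good_B ih

/-- reachability by Rauzy steps -/
def Rch (π π' : Fin (d + 1) → Fin (d + 1)) : Prop :=
  Relation.ReflTransGen (fun a b => ∃ c, b = st c a) π π'

theorem rch_of_mem {π₀ π : Fin (d + 1) → Fin (d + 1)} (h : MemRauzyClass d π₀ π) : Rch π₀ π := by
  induction h with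
  | base => exact .refl
  | opA _ ih => exact ih.tail ⟨true, rfl⟩
  | opB _ ih => exact ih.tail ⟨false, rfl⟩

theorem mem_of_rch {π₀ π π' : Fin (d + 1) → Fin (d + 1)} (h : MemRauzyClass d π₀ π)
    (h' : Rch π π') : MemRauzyClass d π₀ π' := by
  induction h' with
  | refl => exact h
  | tail _ e ih => obtain ⟨c, rfl⟩ := e; exact mem_st c ih

theorem rch_iter (c : Bool) (n : ℕ) (π : Fin (d + 1) → Fin (d + 1)) : Rch π ((st c)^[n] π) := by
  induction n with
  | zero => exact .refl
  | succ n ih => rw [Function.iterate_succ_apply']; exact ih.tail ⟨c, rfl⟩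

theorem st_injOn (c : Bool) {π π' : Fin (d + 1) → Fin (d + 1)} (h : Good π) (h' : Good π')
    (e : st c π = st c π') : π = π' := by
  cases c
  · have e' : rauzyB d π = rauzyB d π' := e
    have hk : kk π = kk π' := by rw [← kk_rauzyB h, ← kk_rauzyB h', e']
    rw [rauzyB_eq, rauzyB_eq, hk] at e'
    funext j
    have := congrFun e' ((sgB (kk π')).symm j)
    simpa using this
  · have e' : rauzyA d π = rauzyA d π' := e
    have hl : π (Fin.last d) = π' (Fin.last d) := by
      rw [← rauzyA_last π, ← rauzyA_last π', e']
    funext j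
    have hv := congrArg Fin.val (congrFun e' j)
    simp only [rauzyA] at hv
    rw [hl] at hv
    rcases eq_or_ne (π j) (Fin.last d) with hi | hi <;>
      rcases eq_or_ne (π' j) (Fin.last d) with hj | hj
    · rw [hi, hj]
    all_goals
      rcases eq_or_ne (π' (Fin.last d)) (Fin.last d) with hl | hl
    all_goals
      first
      | have ei := add_one_val hi
      | skip
      first
      | have ej := add_one_val hj
      | skip
      first
      | have el := add_one_val hl
      | skip
    all_goals
      apply Fin.ext
      have b1 := (π j).2
      have b2 := (π' j).2
      have b3 := (π' (Fin.last d)).2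
      simp only [Fin.ext_iff, Fin.le_def, Fin.val_last] at *
      split_ifs at hv <;> simp_all <;> omega

theorem rch_back (hd : 0 < d) (c : Bool) {π : Fin (d + 1) → Fin (d + 1)} (h : Good π) :
    Rch (st c π) π := by
  let F : {π : Fin (d + 1) → Fin (d + 1) // Good π} → {π : Fin (d + 1) → Fin (d + 1) // Good π} :=
    fun p => ⟨st c p.1, good_st hd c p.2⟩
  have hF : Function.Injective F := fun p p' e =>
    Subtype.ext (st_injOn c p.2 p'.2 (congrArg Subtype.val e))
  obtain ⟨n, hn, hp⟩ := hF.mem_periodicPts ⟨π, h⟩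
  have key : ∀ n p, (F^[n] p).1 = (st c)^[n] p.1 := by
    intro n
    induction n with
    | zero => intro p; rfl
    | succ n ih => intro p; rw [Function.iterate_succ_apply, Function.iterate_succ_apply, ih]
  have h1 := congrArg Subtype.val hp
  rw [key] at h1
  obtain ⟨m, rfl⟩ : ∃ m, n = m + 1 := ⟨n - 1, by omega⟩
  rw [Function.iterate_succ_apply] at h1
  have := rch_iter c m (st c π)
  rwa [h1] at this

theorem rch_symm (hd : 0 < d) {π π' : Fin (d + 1) → Fin (d + 1)} (h : Good π) (hr : Rch π π') :
    Rch π' π ∧ Good π' := by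
  induction hr with
  | refl => exact ⟨.refl, h⟩
  | tail _ e ih =>
    obtain ⟨c, rfl⟩ := e
    exact ⟨(rch_back hd c ih.2).trans ih.1, good_st hd c ih.2⟩

theorem cycA {x : Fin (d + 1)} : ∀ (n : ℕ) {π : Fin (d + 1) → Fin (d + 1)}
    (_ : π (Fin.last d) < π x) (_ : d - (π x : ℕ) = n),
    ∃ i, (st true)^[i] π x = Fin.last d ∧ (st true)^[i] π (Fin.last d) = π (Fin.last d) := by
  intro n
  induction n with
  | zero =>
    intro π h1 h2
    refine ⟨0, ?_, rfl⟩
    have := (π x).2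
    exact Fin.ext (by simp; omega)
  | succ n ih =>
    intro π h1 h2
    have hne : π x ≠ Fin.last d := by intro h; rw [h] at h2; simp at h2
    have e := add_one_val hne
    have e1 : st true π x = π x + 1 := by
      simp [st, rauzyA, not_le.2 h1, hne]
    have e2 : st true π (Fin.last d) = π (Fin.last d) := rauzyA_last π
    obtain ⟨i, hi, hi'⟩ := ih (π := st true π) (by
      rw [e1, e2, Fin.lt_def, e]; rw [Fin.lt_def] at h1; omega) (by rw [e1, e]; omega)
    exact ⟨i + 1, by rw [Function.iterate_succ_apply]; exact hi,
      by rw [Function.iterate_succ_apply, hi', e2]⟩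

theorem cycB : ∀ (n : ℕ) {x : Fin (d + 1)} {π : Fin (d + 1) → Fin (d + 1)} (_ : Good π)
    (_ : kk π < x) (_ : d - (x : ℕ) = n),
    ∃ i, (st false)^[i] π (Fin.last d) = π x := by
  intro n
  induction n with
  | zero =>
    intro x π _ h1 h2
    refine ⟨0, ?_⟩
    have := x.2
    have : x = Fin.last d := Fin.ext (by simp; omega)
    rw [this]; rfl
  | succ n ih =>
    intro x π hg h1 h2
    have hne : x ≠ Fin.last d := by intro h; rw [h] at h2; simp at h2
    have e := add_one_val hne
    have e1 : st false π (x + 1) = π x := by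
      have a1 : ¬ (x + 1 ≤ kk π) := by
        rw [Fin.le_def, e]; rw [Fin.lt_def] at h1; omega
      have a2 : x ≠ kk π := h1.ne'
      simp only [st, cond_false, rauzyB_eq, Function.comp, sgB, Equiv.coe_fn_mk]
      rw [if_neg a1, if_neg (fun h => a2 (add_right_cancel h)), add_sub_cancel_right]
    obtain ⟨i, hi⟩ := ih (x := x + 1) (π := st false π) (good_B hg) (by
      rw [show kk (st false π) = kk π from kk_rauzyB hg, Fin.lt_def, e]
      rw [Fin.lt_def] at h1; omega) (by rw [e]; omega)
    exact ⟨i + 1, by rw [Function.iterate_succ_apply, hi, e1]⟩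

theorem exists_star (hd : 0 < d) {π₀ : Fin (d + 1) → Fin (d + 1)} (h0 : Good π₀) :
    ∃ π, MemRauzyClass d π₀ π ∧ π (Fin.last d) = 0 := by
  obtain ⟨π, hπ, hmin⟩ := Set.exists_min_image {π | MemRauzyClass d π₀ π}
    (fun π => min (π (Fin.last d)) (kk π)) (Set.toFinite _) ⟨π₀, .base⟩
  have hπ : MemRauzyClass d π₀ π := hπ
  have hg := mem_good hd h0 hπ
  have hmin' : ∀ π', Rch π π' → min (π (Fin.last d)) (kk π) ≤ min (π' (Fin.last d)) (kk π') :=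
    fun π' h => hmin π' (mem_of_rch hπ h)
  have hcontra : ∀ p : Fin (d + 1), p ≠ 0 → (∀ j, j < p → π j < p) → False := by
    intro p hp h
    have hv := sub_one_val hp
    have hp' : (p : ℕ) ≠ 0 := fun h => hp (Fin.ext h)
    have := hg.2 (p - 1) (fun j hj => by
      rw [Fin.le_def, hv] at *
      have := h j (by rw [Fin.lt_def]; omega)
      rw [Fin.lt_def] at this; omega)
    have := congrArg Fin.val this
    have := p.2
    rw [hv] at *; simp at *; omega
  by_cases hz : min (π (Fin.last d)) (kk π) = 0
  · rcases min_choice (π (Fin.last d)) (kk π) with h | h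
    · exact ⟨π, hπ, by rw [← h, hz]⟩
    · rw [h] at hz
      obtain ⟨x, hx⟩ := hg.1.2 0
      have hx0 : kk π < x := by
        rw [hz, Fin.pos_iff_ne_zero]
        rintro rfl
        have := kk_spec hg
        rw [hz, hx] at this
        have := congrArg Fin.val this
        simp at this; omega
      obtain ⟨i, hi⟩ := cycB _ hg hx0 rfl
      exact ⟨_, mem_of_rch hπ (rch_iter false i π), by rw [hi, hx]⟩
  · exfalso
    rcases min_choice (π (Fin.last d)) (kk π) with h | h
    · rw [h] at hz hmin'
      apply hcontra _ hz
      intro j hj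
      by_contra hlt
      rw [not_lt] at hlt
      rcases hlt.lt_or_eq with h1 | h1
      · obtain ⟨i, hi, -⟩ := cycA _ h1 rfl
        have h2 := hmin' _ (rch_iter true i π)
        have h3 := kk_eq ((rch_symm hd hg (rch_iter true i π)).2.1.1) hi
        rw [h3] at h2
        exact absurd (h2.trans (min_le_right _ _)) (not_le.2 hj)
      · have := hg.1.1 h1
        rw [← this] at hj
        exact absurd (Fin.le_last _) (not_le.2 hj)
    · rw [h] at hz hmin'
      have hge : Set.MapsTo π (Set.Ici (kk π)) (Set.Ici (kk π)) := by
        intro x hx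
        rcases (show kk π ≤ x from hx).lt_or_eq with h1 | h1
        · obtain ⟨i, hi⟩ := cycB _ hg h1 rfl
          have h2 := hmin' _ (rch_iter false i π)
          rw [hi] at h2
          exact h2.trans (min_le_left _ _)
        · rw [← h1, kk_spec hg]; exact Fin.le_last _
      have hs : Set.SurjOn π (Set.Ici (kk π)) (Set.Ici (kk π)) := by
        have := Finset.surjOn_of_injOn_of_card_le (s := Finset.Ici (kk π)) (t := Finset.Ici (kk π))
          π (by simpa using hge) hg.1.1.injOn le_rfl
        simpa using this
      apply hcontra _ hz
      intro j hj
      by_contra hlt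
      obtain ⟨y, hy, hy2⟩ := hs (show π j ∈ Set.Ici (kk π) from not_lt.1 hlt)
      have := hg.1.1 hy2
      rw [this] at hy
      exact absurd hy (not_le.2 hj)

end VM

namespace VM
variable {d : ℕ}

/-- states: permutation and vector of rates -/
abbrev Sta (d : ℕ) := (Fin (d + 1) → Fin (d + 1)) × (Fin (d + 1) → ℝ)

/-- update of the rates -/
noncomputable def qn (c : Bool) (s : Sta d) : Fin (d + 1) → ℝ := fun i =>
  Function.update s.2 (ls c s.1) (s.2 (ls c s.1) + s.2 (wn c s.1)) (sg c s.1 i)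
/-- next state -/
noncomputable def nx (c : Bool) (s : Sta d) : Sta d := (st c s.1, qn c s)
/-- transition probability -/
noncomputable def pr (c : Bool) (s : Sta d) : ℝ :=
  s.2 (ls c s.1) / (s.2 (ls c s.1) + s.2 (wn c s.1))
/-- valid states -/
def Val (π₀ : Fin (d + 1) → Fin (d + 1)) (s : Sta d) : Prop :=
  MemRauzyClass d π₀ s.1 ∧ ∀ i, 0 < s.2 i
/-- nonnegative superharmonic functions -/
def SH (π₀ : Fin (d + 1) → Fin (d + 1)) (v : Sta d → ℝ) : Prop :=
  (∀ s, Val π₀ s → 0 ≤ v s) ∧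
  ∀ s, Val π₀ s → pr true s * v (nx true s) + pr false s * v (nx false s) ≤ v s
/-- the hitting probability of `G` from `s` is at least `c` -/
def Hits (π₀ : Fin (d + 1) → Fin (d + 1)) (G : Set (Sta d)) (c : ℝ) (s : Sta d) : Prop :=
  ∀ v, SH π₀ v → ∀ e : ℝ, 0 ≤ e → (∀ t ∈ G, Val π₀ t → e ≤ v t) → c * e ≤ v s

variable {π₀ : Fin (d + 1) → Fin (d + 1)}

theorem qn_pos (c : Bool) {s : Sta d} (h : ∀ i, 0 < s.2 i) (i) : 0 < qn c s i := by
  unfold qn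
  rw [Function.update_apply]
  split_ifs
  · exact add_pos (h _) (h _)
  · exact h _

theorem qn_ge (c : Bool) {s : Sta d} (h : ∀ i, 0 < s.2 i) {m : ℝ} (hm : ∀ i, m ≤ s.2 i) (i) :
    m ≤ qn c s i := by
  unfold qn
  rw [Function.update_apply]
  split_ifs
  · have := hm (ls c s.1); have := h (wn c s.1); linarith
  · exact hm _

theorem qn_le (c : Bool) {s : Sta d} (h : ∀ i, 0 < s.2 i) {m : ℝ} (hm : ∀ i, s.2 i ≤ m) (i) :
    qn c s i ≤ 2 * m := by
  unfold qn
  rw [Function.update_apply]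
  split_ifs
  · have := hm (ls c s.1); have := hm (wn c s.1); linarith
  · have := hm (sg c s.1 i); have := h (sg c s.1 i); linarith

theorem val_nx (c : Bool) {s : Sta d} (h : Val π₀ s) : Val π₀ (nx c s) :=
  ⟨mem_st c h.1, qn_pos c h.2⟩

theorem pr_pos (c : Bool) {s : Sta d} (h : ∀ i, 0 < s.2 i) : 0 < pr c s :=
  div_pos (h _) (add_pos (h _) (h _))

theorem pr_add {s : Sta d} (h : ∀ i, 0 < s.2 i) : pr true s + pr false s = 1 := by
  have h1 := h (kk s.1)
  have h2 := h (Fin.last d)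
  simp only [pr, ls, wn, cond_true, cond_false]
  field_simp
  ring

theorem hits_mem {G : Set (Sta d)} {c : ℝ} {s : Sta d} (h : s ∈ G) (hv : Val π₀ s) (hc : c ≤ 1) :
    Hits π₀ G c s := fun v _ e he hG => by
  have := hG s h hv
  nlinarith

theorem hits_nonpos {G : Set (Sta d)} {c : ℝ} {s : Sta d} (hv : Val π₀ s) (hc : c ≤ 0) :
    Hits π₀ G c s := fun v hv' e he _ => by
  have := hv'.1 s hv
  nlinarith

theorem hits_mono {G G' : Set (Sta d)} {c c' : ℝ} {s : Sta d} (h : Hits π₀ G c s)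
    (hG : ∀ t ∈ G, Val π₀ t → t ∈ G') (hc : c' ≤ c) : Hits π₀ G' c' s := fun v hv e he h' => by
  have := h v hv e he (fun t ht hvt => h' t (hG t ht hvt) hvt)
  nlinarith

theorem hits_trans {G G' : Set (Sta d)} {c c' : ℝ} {s : Sta d} (h : Hits π₀ G c s) (hc' : 0 ≤ c')
    (h' : ∀ t ∈ G, Val π₀ t → Hits π₀ G' c' t) : Hits π₀ G' (c * c') s := fun v hv e he hG => by
  rw [mul_assoc]
  exact h v hv (c' * e) (mul_nonneg hc' he) (fun t ht hvt => h' t ht hvt v hv e he hG)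

theorem hits_step2 {G : Set (Sta d)} {c1 c2 : ℝ} {s : Sta d} (hv : Val π₀ s)
    (h1 : Hits π₀ G c1 (nx true s)) (h2 : Hits π₀ G c2 (nx false s)) :
    Hits π₀ G (pr true s * c1 + pr false s * c2) s := fun v hv' e he hG => by
  have a1 := h1 v hv' e he hG
  have a2 := h2 v hv' e he hG
  have a3 := hv'.2 s hv
  have p1 := pr_pos true hv.2
  have p2 := pr_pos false hv.2
  nlinarith

theorem hits_step1 (b : Bool) {G : Set (Sta d)} {c p : ℝ} {s : Sta d} (hv : Val π₀ s)
    (h1 : Hits π₀ G c (nx b s)) (hc : 0 ≤ c) (hp : p ≤ pr b s) :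
    Hits π₀ G (p * c) s := by
  have h2 : Hits π₀ G (pr b s * c) s := by
    cases b
    · have := hits_step2 hv (hits_nonpos (val_nx true hv) le_rfl) h1
      simpa using this
    · have := hits_step2 hv h1 (hits_nonpos (val_nx false hv) le_rfl)
      simpa using this
  exact hits_mono h2 (fun _ h _ => h) (mul_le_mul_of_nonneg_right hp hc)

theorem pr_ge (c : Bool) {s : Sta d} (h : ∀ i, 0 < s.2 i) {K : ℝ}
    (hK : s.2 (wn c s.1) ≤ K * s.2 (ls c s.1)) (hK0 : 0 < 1 + K) : 1 / (1 + K) ≤ pr c s := by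
  unfold pr
  rw [div_le_div_iff₀ hK0 (add_pos (h _) (h _))]
  nlinarith

theorem sum_qn (c : Bool) (s : Sta d) (f : ℝ → ℝ) :
    ∑ i, f (qn c s i) = ∑ i, f (s.2 i) - f (s.2 (ls c s.1))
      + f (s.2 (ls c s.1) + s.2 (wn c s.1)) := by
  unfold qn
  rw [Equiv.sum_comp (sg c s.1) (fun i => f (Function.update s.2 (ls c s.1)
    (s.2 (ls c s.1) + s.2 (wn c s.1)) i))]
  rw [← Finset.add_sum_erase _ _ (Finset.mem_univ (ls c s.1)),
    ← Finset.add_sum_erase _ (fun i => f (s.2 i)) (Finset.mem_univ (ls c s.1))]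
  have : ∀ i ∈ Finset.univ.erase (ls c s.1), f (Function.update s.2 (ls c s.1)
    (s.2 (ls c s.1) + s.2 (wn c s.1)) i) = f (s.2 i) := by
    intro i hi
    rw [Function.update_of_ne (Finset.ne_of_mem_erase hi)]
  rw [Finset.sum_congr rfl this]
  simp
  ring

/-- number of large letters -/
noncomputable def NN (θ : ℝ) (q : Fin (d + 1) → ℝ) : ℝ := ∑ i, if θ ≤ q i then (1 : ℝ) else 0
/-- total rate of large letters -/
noncomputable def DD (θ : ℝ) (q : Fin (d + 1) → ℝ) : ℝ := ∑ i, if θ ≤ q i then q i else 0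

theorem le_DD {θ : ℝ} (h0 : 0 < θ) {q : Fin (d + 1) → ℝ} {i} (h : θ ≤ q i) : q i ≤ DD θ q := by
  have : ∀ j ∈ Finset.univ, 0 ≤ (if θ ≤ q j then q j else 0) := by
    intro j _; split_ifs <;> linarith
  have := Finset.single_le_sum this (Finset.mem_univ i)
  simpa [DD, h] using this

theorem wn_ne_ls (hd : 0 < d) (c : Bool) {π : Fin (d + 1) → Fin (d + 1)} (h : Good π) :
    wn c π ≠ ls c π := by
  have := kk_ne hd h
  cases c
  · exact this
  · exact this.symm

/-- one of the two last letters is small -/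
def SP (θ : ℝ) (s : Sta d) : Prop := s.2 (Fin.last d) < θ ∨ s.2 (kk s.1) < θ

theorem sp_nx (hd : 0 < d) (c : Bool) {s : Sta d} (hg : Good s.1) {θ : ℝ}
    (h : s.2 (wn c s.1) < θ) : SP θ (nx c s) := by
  have key : (nx c s).2 (wn c (nx c s).1) < θ := by
    simp only [nx, qn]
    rw [sg_wn c hg, Function.update_of_ne (wn_ne_ls hd c hg)]
    exact h
  cases c
  · exact Or.inr key
  · exact Or.inl key

theorem phase2 (hd : 0 < d) (h0 : Good π₀) {θ T m0 j : ℝ} (hθ : 0 < θ) (hT : θ ≤ T) (hm0 : 0 < m0) :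
    ∀ n : ℕ, ∀ s : Sta d, Val π₀ s → (∀ i, m0 ≤ s.2 i) → SP θ s → j ≤ NN θ s.2 →
      T + (d + 1) * θ - ∑ i, s.2 i ≤ n * m0 →
      Hits π₀ {t | j + 1 ≤ NN θ t.2 ∧ ∀ i, t.2 i ≤ 2 * T} (1 - DD θ s.2 / T) s := by
  intro n
  induction n with
  | zero =>
    intro s hv hm hsp hj hn
    apply hits_nonpos hv
    have hT0 : 0 < T := hθ.trans_le hT
    have : ∑ i, s.2 i ≤ DD θ s.2 + (d + 1) * θ := by
      have e : ((d : ℝ) + 1) * θ = ∑ i : Fin (d + 1), θ := by simp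
      rw [e, DD, ← Finset.sum_add_distrib]
      apply Finset.sum_le_sum
      intro i _
      split_ifs <;> linarith
    have : T ≤ DD θ s.2 := by push_cast at hn; linarith
    have := (one_le_div hT0).2 this
    linarith
  | succ n ih =>
    intro s hv hm hsp hj hn
    have hT0 : 0 < T := hθ.trans_le hT
    rcases le_or_gt T (DD θ s.2) with hD | hD
    · apply hits_nonpos hv
      have := (one_le_div hT0).2 hD
      linarith
    have hg := mem_good hd h0 hv.1
    have hqT : ∀ i, s.2 i ≤ T := by
      intro i
      rcases le_or_gt θ (s.2 i) with h | h
      · exact (le_DD hθ h).trans hD.le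
      · linarith
    have hqn : ∀ c i, qn c s i ≤ 2 * T := fun c i => qn_le c hv.2 hqT i
    have hsum : ∀ c, T + (d + 1) * θ - ∑ i, (nx c s).2 i ≤ n * m0 := by
      intro c
      have := sum_qn c s id
      simp only [id] at this
      change _ - ∑ i, qn c s i ≤ _
      rw [this]
      have := hm (wn c s.1)
      push_cast at hn
      linarith
    have succ_case : ∀ c, s.2 (ls c s.1) < θ → θ ≤ s.2 (ls c s.1) + s.2 (wn c s.1) →
        Hits π₀ {t | j + 1 ≤ NN θ t.2 ∧ ∀ i, t.2 i ≤ 2 * T} 1 (nx c s) := by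
      intro c h1 h2
      apply hits_mem _ (val_nx c hv) le_rfl
      refine ⟨?_, hqn c⟩
      have := sum_qn c s (fun t => if θ ≤ t then 1 else 0)
      change _ ≤ NN θ (qn c s)
      unfold NN at hj ⊢
      rw [this, if_neg (not_le.2 h1), if_pos h2]
      linarith
    have hDn : 0 ≤ DD θ s.2 / T := by
      apply div_nonneg _ hT0.le
      apply Finset.sum_nonneg
      intro i _
      split_ifs <;> linarith
    have rec_case : ∀ c, s.2 (wn c s.1) < θ → j ≤ NN θ (qn c s) →
        Hits π₀ {t | j + 1 ≤ NN θ t.2 ∧ ∀ i, t.2 i ≤ 2 * T} (1 - DD θ (qn c s) / T) (nx c s) := by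
      intro c h1 h2
      exact ih (nx c s) (val_nx c hv) (qn_ge c hv.2 hm) (sp_nx hd c hg h1) h2 (hsum c)
    have caseSS : ∀ c, s.2 (wn c s.1) < θ → s.2 (ls c s.1) < θ →
        Hits π₀ {t | j + 1 ≤ NN θ t.2 ∧ ∀ i, t.2 i ≤ 2 * T} (1 - DD θ s.2 / T) (nx c s) := by
      intro c hw hl
      rcases le_or_gt θ (s.2 (ls c s.1) + s.2 (wn c s.1)) with h | h
      · exact hits_mono (succ_case c hl h) (fun _ h _ => h) (by linarith)
      · have e1 := sum_qn c s (fun t => if θ ≤ t then 1 else 0)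
        have e2 := sum_qn c s (fun t => if θ ≤ t then t else 0)
        rw [if_neg (not_le.2 hl), if_neg (not_le.2 h)] at e1 e2
        have e2' : DD θ (qn c s) = DD θ s.2 := by unfold DD; rw [e2]; ring
        rw [← e2']
        apply rec_case c hw
        unfold NN at hj ⊢
        rw [e1]; linarith
    have caseSL : ∀ c, s.2 (wn c s.1) < θ → θ ≤ s.2 (ls c s.1) →
        Hits π₀ {t | j + 1 ≤ NN θ t.2 ∧ ∀ i, t.2 i ≤ 2 * T}
          (1 - (DD θ s.2 + s.2 (wn c s.1)) / T) (nx c s) := by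
      intro c hw hl
      have h : θ ≤ s.2 (ls c s.1) + s.2 (wn c s.1) := by have := hv.2 (wn c s.1); linarith
      have e1 := sum_qn c s (fun t => if θ ≤ t then 1 else 0)
      have e2 := sum_qn c s (fun t => if θ ≤ t then t else 0)
      rw [if_pos hl, if_pos h] at e1 e2
      have e2' : DD θ (qn c s) = DD θ s.2 + s.2 (wn c s.1) := by unfold DD; rw [e2]; ring
      rw [← e2']
      apply rec_case c hw
      unfold NN at hj ⊢
      rw [e1]; linarith
    have mix : ∀ a b D : ℝ, 0 < a → 0 < b → b ≤ D →
        1 - D / T ≤ b / (b + a) * (1 - (D + a) / T) + a / (a + b) * 1 := by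
      intro a b D ha hb hbD
      have : b / (b + a) * (1 - (D + a) / T) + a / (a + b) * 1 - (1 - D / T)
          = a * (D - b) / ((a + b) * T) := by field_simp; ring
      have h2 : 0 ≤ a * (D - b) / ((a + b) * T) :=
        div_nonneg (mul_nonneg ha.le (by linarith)) (by positivity)
      linarith
    have ha := hv.2 (Fin.last d)
    have hb := hv.2 (kk s.1)
    rcases lt_or_ge (s.2 (Fin.last d)) θ with h1 | h1 <;>
      rcases lt_or_ge (s.2 (kk s.1)) θ with h2 | h2
    · have := hits_step2 hv (caseSS true h1 h2) (caseSS false h2 h1)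
      rwa [← add_mul, pr_add hv.2, one_mul] at this
    · have := hits_step2 hv (caseSL true h1 h2)
        (succ_case false h1 (by
          change θ ≤ s.2 (Fin.last d) + s.2 (kk s.1); linarith))
      exact hits_mono this (fun _ h _ => h) (mix _ _ _ ha hb (le_DD hθ h2))
    · have := hits_step2 hv (succ_case true h2 (by
          change θ ≤ s.2 (kk s.1) + s.2 (Fin.last d); linarith)) (caseSL false h2 h1)
      refine hits_mono this (fun _ h _ => h) ?_
      have := mix _ _ _ hb ha (le_DD hθ h1)
      exact this.trans (le_of_eq (add_comm _ _))
    · rcases hsp with h | h <;> linarith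

end VM

namespace VM
variable {d : ℕ} {π₀ : Fin (d + 1) → Fin (d + 1)}

/-- target of the first phase -/
def Gl (θ j R : ℝ) : Set (Sta d) := {s | SP θ s ∧ j ≤ NN θ s.2 ∧ ∀ i, s.2 i ≤ R * θ}

theorem NN_qn {θ : ℝ} (c : Bool) {s : Sta d} (h : ∀ i, 0 < s.2 i) (hl : θ ≤ s.2 (ls c s.1)) :
    NN θ (qn c s) = NN θ s.2 := by
  have e1 := sum_qn c s (fun t => if θ ≤ t then 1 else 0)
  have := h (wn c s.1)
  rw [if_pos hl, if_pos (by linarith)] at e1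
  unfold NN
  rw [e1]; ring

theorem hits_weak {G G' : Set (Sta d)} {R R' : ℝ} {s : Sta d} (h : Hits π₀ G (1 / R) s)
    (hR : 0 < R) (hR' : R ≤ R') (hG : G ⊆ G') : Hits π₀ G' (1 / R') s :=
  hits_mono h (fun _ h _ => hG h) (one_div_le_one_div_of_le hR hR')

theorem Gl_mono {θ j R R' : ℝ} (h0 : 0 < θ) (hR' : R ≤ R') : Gl (d := d) θ j R ⊆ Gl θ j R' :=
  fun _ h => ⟨h.1, h.2.1, fun i => (h.2.2 i).trans (by nlinarith)⟩

theorem ph_step {θ j K R : ℝ} (hθ : 0 < θ) (hK : 1 ≤ K) (hR : 1 ≤ R) (c : Bool) {s : Sta d}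
    (hv : Val π₀ s) (hsp : ¬ SP θ s) (hq : ∀ i, s.2 i ≤ K * θ)
    (h : Hits π₀ (Gl θ j R) (1 / R) (nx c s)) :
    Hits π₀ (Gl θ j ((1 + K) * R)) (1 / ((1 + K) * R)) s := by
  have hl : θ ≤ s.2 (ls c s.1) := by
    simp only [SP, not_or, not_lt] at hsp
    cases c
    · exact hsp.1
    · exact hsp.2
  have h1 := pr_ge c hv.2 (K := K) (by have := hq (wn c s.1); nlinarith) (by linarith)
  have h2 := hits_step1 c hv h (by positivity) h1
  rw [one_div_mul_one_div] at h2
  exact hits_mono h2 (fun _ h _ => Gl_mono hθ (by nlinarith) h) le_rfl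

theorem p1a (hd : 0 < d) (h0 : Good π₀) : ∀ (n : ℕ) (K : ℝ), 1 ≤ K → ∃ R : ℝ, 1 ≤ R ∧
    ∀ (s : Sta d) (x : Fin (d + 1)) (θ j : ℝ), Val π₀ s → 0 < θ → s.2 x < θ →
      s.1 (Fin.last d) < s.1 x → d - (s.1 x : ℕ) ≤ n → j ≤ NN θ s.2 → (∀ i, s.2 i ≤ K * θ) →
      Hits π₀ (Gl θ j R) (1 / R) s := by
  intro n
  induction n with
  | zero =>
    intro K hK
    refine ⟨K, hK, fun s x θ j hv hθ hx hl hn hj hq => ?_⟩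
    have hg := mem_good hd h0 hv.1
    have : s.1 x = Fin.last d := by
      apply Fin.ext; have := (s.1 x).2; rw [Fin.val_last]; omega
    have hk := kk_eq hg.1.1 this
    exact hits_mem ⟨Or.inr (by rw [hk]; exact hx), hj, hq⟩ hv ((div_le_one (by linarith)).2 hK)
  | succ n ih =>
    intro K hK
    obtain ⟨R, hR, h⟩ := ih (2 * K) (by linarith)
    have hRK : K ≤ (1 + K) * (R + K) := by nlinarith
    refine ⟨(1 + K) * (R + K), by nlinarith, fun s x θ j hv hθ hx hl hn hj hq => ?_⟩
    have hg := mem_good hd h0 hv.1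
    by_cases hsp : SP θ s
    · exact hits_mem (Gl_mono hθ hRK ⟨hsp, hj, hq⟩) hv ((div_le_one (by nlinarith)).2 (by nlinarith))
    · apply ph_step hθ hK (by linarith) true hv hsp hq
      have hsp' := hsp
      simp only [SP, not_or, not_lt] at hsp'
      have hxk : x ≠ kk s.1 := by rintro rfl; linarith [hsp'.2]
      have hxl : s.1 x ≠ Fin.last d := fun h => hxk (kk_eq hg.1.1 h).symm
      have hst : (nx true s).1 x = s.1 x + 1 := by
        change rauzyA d s.1 x = _
        unfold rauzyA
        rw [if_neg (not_le.2 hl), if_neg hxl]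
      have hv1 := add_one_val hxl
      have hlx : (nx true s).1 (Fin.last d) = s.1 (Fin.last d) := rauzyA_last s.1
      have hqx : (nx true s).2 x = s.2 x := by
        change Function.update s.2 (kk s.1) _ x = _
        rw [Function.update_of_ne hxk]
      apply hits_weak (h (nx true s) x θ j (val_nx true hv) hθ (by rw [hqx]; exact hx) ?_ ?_ ?_ ?_)
        (by linarith) (by linarith) (Gl_mono hθ (by linarith))
      · rw [hst, hlx]
        rw [Fin.lt_def] at hl ⊢
        omega
      · rw [hst, hv1]; omega
      · change j ≤ NN θ (qn true s)
        rw [NN_qn true hv.2 hsp'.2]; exact hj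
      · intro i
        have := qn_le true hv.2 hq i
        change qn true s i ≤ _
        linarith

theorem p1b (hd : 0 < d) (h0 : Good π₀) {π' : Fin (d + 1) → Fin (d + 1)} (hs : π' (Fin.last d) = 0)
    {π : Fin (d + 1) → Fin (d + 1)} (hr : Rch π π') :
    ∀ K : ℝ, 1 ≤ K → ∃ R : ℝ, 1 ≤ R ∧
    ∀ (q : Fin (d + 1) → ℝ) (x : Fin (d + 1)) (θ j : ℝ), Val π₀ (π, q) → 0 < θ → q x < θ →
      j ≤ NN θ q → (∀ i, q i ≤ K * θ) → Hits π₀ (Gl θ j R) (1 / R) (π, q) := by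
  induction hr using Relation.ReflTransGen.head_induction_on with
  | refl =>
    intro K hK
    obtain ⟨R, hR, h⟩ := p1a hd h0 d K hK
    have hRK : K ≤ (R + K) := by linarith
    refine ⟨R + K, by linarith, fun q x θ j hv hθ hx hj hq => ?_⟩
    have hg := mem_good hd h0 hv.1
    by_cases hsp : SP θ (π', q)
    · exact hits_mem (Gl_mono hθ hRK ⟨hsp, hj, hq⟩) hv ((div_le_one (by nlinarith)).2 (by nlinarith))
    · apply hits_weak (h _ x θ j hv hθ hx _ (Nat.sub_le _ _) hj hq)
        (by linarith) (by linarith) (Gl_mono hθ (by linarith))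
      change π' _ < π' x
      rw [hs]
      apply Fin.pos_of_ne_zero
      intro h
      rw [← hs] at h
      have := hg.1.1 h
      subst this
      exact hsp (Or.inl hx)
  | @head a b h' hbc ih =>
    obtain ⟨c, rfl⟩ := h'
    intro K hK
    obtain ⟨R, hR, h⟩ := ih (2 * K) (by linarith)
    have hRK : K ≤ (1 + K) * (R + K) := by nlinarith
    refine ⟨(1 + K) * (R + K), by nlinarith, fun q x θ j hv hθ hx hj hq => ?_⟩
    by_cases hsp : SP θ (a, q)
    · exact hits_mem (Gl_mono hθ hRK ⟨hsp, hj, hq⟩) hv ((div_le_one (by nlinarith)).2 (by nlinarith))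
    · apply ph_step hθ hK (by linarith) c hv hsp hq
      have hl : θ ≤ q (ls c a) := by
        simp only [SP, not_or, not_lt] at hsp
        cases c
        · exact hsp.1
        · exact hsp.2
      have hxk : x ≠ ls c a := by rintro rfl; linarith
      apply hits_weak (h (qn c (a, q)) ((sg c a).symm x) θ j (val_nx c hv) hθ _ _ _)
        (by linarith) (by linarith) (Gl_mono hθ (by linarith))
      · unfold qn
        rw [Equiv.apply_symm_apply, Function.update_of_ne hxk]; exact hx
      · rw [NN_qn c hv.2 hl]; exact hj
      · intro i
        have := qn_le c hv.2 hq i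
        linarith

theorem p1 (hd : 0 < d) (h0 : Good π₀) (K : ℝ) (hK : 1 ≤ K) : ∃ R : ℝ, 1 ≤ R ∧
    ∀ (s : Sta d) (x : Fin (d + 1)) (θ j : ℝ), Val π₀ s → 0 < θ → s.2 x < θ →
      j ≤ NN θ s.2 → (∀ i, s.2 i ≤ K * θ) → Hits π₀ (Gl θ j R) (1 / R) s := by
  obtain ⟨π', hm, hs⟩ := exists_star hd h0
  have H : ∀ π : Fin (d + 1) → Fin (d + 1), ∃ R : ℝ, 1 ≤ R ∧ (MemRauzyClass d π₀ π →
    ∀ (q : Fin (d + 1) → ℝ) (x : Fin (d + 1)) (θ j : ℝ), Val π₀ (π, q) → 0 < θ → q x < θ →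
      j ≤ NN θ q → (∀ i, q i ≤ K * θ) → Hits π₀ (Gl θ j R) (1 / R) (π, q)) := by
    intro π
    by_cases hπ : MemRauzyClass d π₀ π
    · have r1 := (rch_symm hd h0 (rch_of_mem hπ)).1
      have r2 := rch_of_mem hm
      obtain ⟨R, hR, h⟩ := p1b hd h0 hs (Relation.ReflTransGen.trans r1 r2) K hK
      exact ⟨R, hR, fun _ => h⟩
    · exact ⟨1, le_rfl, fun h => absurd h hπ⟩
  choose R hR h using H
  have hle : ∀ π, R π ≤ ∑ π, R π := fun π =>
    Finset.single_le_sum (f := R) (fun i _ => by linarith [hR i]) (Finset.mem_univ π)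
  refine ⟨∑ π, R π, (hR π₀).trans (hle π₀), fun s x θ j hv hθ hx hj hq => ?_⟩
  exact hits_weak (h s.1 hv.1 s.2 x θ j hv hθ hx hj hq) (by linarith [hR s.1]) (hle s.1)
    (Gl_mono hθ (hle s.1))

/-- at least `j` letters are large, relative to the maximum -/
def Lg (j R : ℝ) : Set (Sta d) := {s | ∃ θ > 0, j ≤ NN θ s.2 ∧ ∀ i, s.2 i ≤ R * θ}
/-- balanced -/
def Bal (R : ℝ) (q : Fin (d + 1) → ℝ) : Prop := ∀ i k, q i ≤ R * q k

theorem lg_step (hd : 0 < d) (h0 : Good π₀) (j : ℕ) (hj : j ≤ d) (K : ℝ) (hK : 1 ≤ K) :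
    ∃ R : ℝ, 1 ≤ R ∧ ∀ s ∈ Lg (d := d) j K, Val π₀ s → Hits π₀ (Lg (j + 1 : ℕ) R) (1 / R) s := by
  obtain ⟨R, hR, h⟩ := p1 hd h0 K hK
  have hd1 : (1 : ℝ) ≤ d + 1 := by linarith [Nat.cast_nonneg (α := ℝ) d]
  have hm1 : 0 ≤ (d : ℝ) * R := mul_nonneg (Nat.cast_nonneg d) (by linarith)
  refine ⟨4 * (d + 1) * R + K, by nlinarith, ?_⟩
  rintro s ⟨θ, hθ, hjN, hq⟩ hv
  by_cases hx : ∃ x, s.2 x < θ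
  · obtain ⟨x, hx⟩ := hx
    have a1 := h s x θ j hv hθ hx hjN hq
    have a2 : ∀ t ∈ Gl θ j R, Val π₀ t → Hits π₀ (Lg (j + 1 : ℕ) (4 * (d + 1) * R + K)) (1 / 2) t := by
      rintro t ⟨hsp, hjt, hqt⟩ hvt
      obtain ⟨i0, hi0⟩ := Finite.exists_min t.2
      have hT : θ ≤ 2 * (d + 1) * R * θ := by nlinarith
      obtain ⟨n, hn⟩ := exists_nat_ge ((2 * (d + 1) * R * θ + (d + 1) * θ - ∑ i, t.2 i) / t.2 i0)
      have hm0 := hvt.2 i0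
      rw [div_le_iff₀ hm0] at hn
      have := phase2 hd h0 hθ hT hm0 n t hvt hi0 hsp hjt hn
      refine hits_mono this ?_ ?_
      · rintro u ⟨hu1, hu2⟩ _
        refine ⟨θ, hθ, by push_cast; exact hu1, fun i => (hu2 i).trans (by nlinarith)⟩
      · have hD : DD θ t.2 ≤ (d + 1) * R * θ := by
          have e : ((d : ℝ) + 1) * R * θ = ∑ i : Fin (d + 1), R * θ := by simp; ring
          rw [e, DD]
          apply Finset.sum_le_sum
          intro i _
          split_ifs
          · exact hqt i
          · nlinarith
        rw [le_sub_comm, div_le_iff₀ (by linarith)]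
        linarith
    have := hits_trans a1 (by norm_num) a2
    refine hits_mono this (fun _ h _ => h) ?_
    rw [one_div_mul_one_div]
    exact one_div_le_one_div_of_le (by linarith) (by nlinarith)
  · push Not at hx
    apply hits_mem _ hv ((div_le_one (by nlinarith)).2 (by nlinarith))
    refine ⟨θ, hθ, ?_, fun i => (hq i).trans (by nlinarith)⟩
    have : NN θ s.2 = d + 1 := by simp [NN, hx]
    rw [this]
    exact_mod_cast Nat.succ_le_succ hj

theorem lg_all (hd : 0 < d) (h0 : Good π₀) (j : ℕ) (hj : j ≤ d + 1) :
    ∃ R : ℝ, 1 ≤ R ∧ ∀ s : Sta d, Val π₀ s → Hits π₀ (Lg j R) (1 / R) s := by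
  induction j with
  | zero =>
    refine ⟨1, le_rfl, fun s hv => hits_mem ?_ hv (by norm_num)⟩
    refine ⟨∑ i, s.2 i, Finset.sum_pos (fun i _ => hv.2 i) ⟨0, Finset.mem_univ _⟩, ?_, fun i => ?_⟩
    · rw [Nat.cast_zero]
      apply Finset.sum_nonneg
      intro i _
      split_ifs <;> norm_num
    · rw [one_mul]
      exact Finset.single_le_sum (fun i _ => (hv.2 i).le) (Finset.mem_univ i)
  | succ j ih =>
    obtain ⟨K, hK, h⟩ := ih (by omega)
    obtain ⟨R, hR, h'⟩ := lg_step hd h0 j (by omega) K hK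
    refine ⟨K * R, by nlinarith, fun s hv => ?_⟩
    have := hits_trans (h s hv) (by positivity) h'
    rw [one_div_mul_one_div] at this
    refine hits_mono this ?_ le_rfl
    rintro t ⟨θ, hθ, a, b⟩ _
    exact ⟨θ, hθ, a, fun i => (b i).trans (mul_le_mul_of_nonneg_right (by nlinarith) hθ.le)⟩

theorem bal_all (hd : 0 < d) (h0 : Good π₀) :
    ∃ R : ℝ, 1 ≤ R ∧ ∀ s : Sta d, Val π₀ s → Hits π₀ {t | Bal R t.2} (1 / R) s := by
  obtain ⟨R, hR, h⟩ := lg_all hd h0 (d + 1) le_rfl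
  refine ⟨R, hR, fun s hv => hits_mono (h s hv) ?_ le_rfl⟩
  rintro t ⟨θ, hθ, a, b⟩ _ i k
  have hk : θ ≤ t.2 k := by
    by_contra hk
    have h1 : NN θ t.2 < ∑ i : Fin (d + 1), (1 : ℝ) := by
      unfold NN
      apply Finset.sum_lt_sum
      · intro i _; split_ifs <;> norm_num
      · exact ⟨k, Finset.mem_univ _, by rw [if_neg hk]; norm_num⟩
    simp at h1
    push_cast at a
    linarith
  exact (b i).trans (by nlinarith)

theorem bal_nx {K : ℝ} (hK : 1 ≤ K) (c : Bool) {s : Sta d} (h : ∀ i, 0 < s.2 i) (hb : Bal K s.2) :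
    Bal (2 * K) (nx c s).2 := by
  obtain ⟨i0, hi0⟩ := Finite.exists_min s.2
  intro i k
  have a1 := qn_le c h (fun i => hb i i0) i
  have a2 := qn_ge c h hi0 k
  change qn c s i ≤ _ * qn c s k
  nlinarith

theorem bal_step {K R : ℝ} {G : Set (Sta d)} (hK : 1 ≤ K) (hR : 1 ≤ R) (c : Bool) {s : Sta d}
    (hv : Val π₀ s) (hb : Bal K s.2) (h : Hits π₀ G (1 / R) (nx c s)) :
    Hits π₀ G (1 / ((1 + K) * R)) s := by
  have := hits_step1 c hv h (by positivity) (pr_ge c hv.2 (hb _ _) (by linarith))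
  rwa [one_div_mul_one_div] at this

theorem bal_mono {K R : ℝ} (h : K ≤ R) {q : Fin (d + 1) → ℝ} (hq : ∀ i, 0 < q i) (hb : Bal K q) :
    Bal R q := fun i k => (hb i k).trans (mul_le_mul_of_nonneg_right h (hq k).le)

theorem bal_path {π' π : Fin (d + 1) → Fin (d + 1)} (hr : Rch π π') :
    ∀ K : ℝ, 1 ≤ K → ∃ R : ℝ, 1 ≤ R ∧ ∀ (q : Fin (d + 1) → ℝ), Val π₀ (π, q) → Bal K q →
      Hits π₀ {t | t.1 = π' ∧ Bal R t.2} (1 / R) (π, q) := by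
  induction hr using Relation.ReflTransGen.head_induction_on with
  | refl =>
    intro K hK
    exact ⟨K, hK, fun q hv hb => hits_mem ⟨rfl, hb⟩ hv ((div_le_one (by linarith)).2 hK)⟩
  | @head a b h' hbc ih =>
    obtain ⟨c, rfl⟩ := h'
    intro K hK
    obtain ⟨R, hR, h⟩ := ih (2 * K) (by linarith)
    refine ⟨(1 + K) * R, by nlinarith, fun q hv hb => ?_⟩
    have h1 := h (qn c (a, q)) (val_nx c hv) (bal_nx hK c hv.2 hb)
    refine hits_mono (bal_step hK hR c hv hb h1) ?_ le_rfl
    rintro t ⟨h1, h2⟩ hvt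
    exact ⟨h1, bal_mono (by nlinarith) hvt.2 h2⟩

theorem bal_hit (hd : 0 < d) (h0 : Good π₀) {π' : Fin (d + 1) → Fin (d + 1)}
    (hm : MemRauzyClass d π₀ π') :
    ∃ R : ℝ, 1 ≤ R ∧ ∀ s : Sta d, Val π₀ s → Hits π₀ {t | t.1 = π' ∧ Bal R t.2} (1 / R) s := by
  obtain ⟨K, hK, hb⟩ := bal_all hd h0
  have H : ∀ π : Fin (d + 1) → Fin (d + 1), ∃ R : ℝ, 1 ≤ R ∧ (MemRauzyClass d π₀ π →
    ∀ (q : Fin (d + 1) → ℝ), Val π₀ (π, q) → Bal K q →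
      Hits π₀ {t | t.1 = π' ∧ Bal R t.2} (1 / R) (π, q)) := by
    intro π
    by_cases hπ : MemRauzyClass d π₀ π
    · have r1 := (rch_symm hd h0 (rch_of_mem hπ)).1
      have r2 := rch_of_mem hm
      obtain ⟨R, hR, h⟩ := bal_path (Relation.ReflTransGen.trans r1 r2) K hK
      exact ⟨R, hR, fun _ => h⟩
    · exact ⟨1, le_rfl, fun h => absurd h hπ⟩
  choose R hR h using H
  have hle : ∀ π, R π ≤ ∑ π, R π := fun π =>
    Finset.single_le_sum (f := R) (fun i _ => by linarith [hR i]) (Finset.mem_univ π)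
  have hle1 : 1 ≤ ∑ π, R π := (hR π₀).trans (hle π₀)
  refine ⟨K * ∑ π, R π, by nlinarith, fun s hv => ?_⟩
  have := hits_trans (c' := 1 / ∑ π, R π) (hb s hv) (by positivity) (fun t ht hvt =>
    hits_mono (h t.1 hvt.1 t.2 hvt ht) (G' := {t | t.1 = π' ∧ Bal (K * ∑ π, R π) t.2})
      (fun u hu hvu => ⟨hu.1, bal_mono (by have := hle t.1; nlinarith) hvu.2 hu.2⟩)
      (one_div_le_one_div_of_le (by linarith [hR t.1]) (hle t.1)))
  rw [one_div_mul_one_div] at this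
  exact this

end VM

namespace VM
variable {d : ℕ} {π₀ : Fin (d + 1) → Fin (d + 1)}

/-- number of times letter `i` loses in the first `N` steps -/
noncomputable def wN (π : Fin (d + 1) → Fin (d + 1)) (N : ℕ) (i : Fin (d + 1)) : ℕ :=
  ∑ t ∈ Finset.range N, if i = kk ((st true)^[t] π) then 1 else 0

theorem good_iter (hd : 0 < d) {π : Fin (d + 1) → Fin (d + 1)} (h : Good π) (N : ℕ) :
    Good ((st true)^[N] π) := by
  induction N with
  | zero => exact h
  | succ n ih => rw [Function.iterate_succ_apply']; exact good_st hd true ih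

theorem last_iter (π : Fin (d + 1) → Fin (d + 1)) (N : ℕ) :
    (st true)^[N] π (Fin.last d) = π (Fin.last d) := by
  induction N with
  | zero => rfl
  | succ n ih => rw [Function.iterate_succ_apply']; exact (rauzyA_last _).trans ih

theorem wN_last (hd : 0 < d) {π : Fin (d + 1) → Fin (d + 1)} (h : Good π) (N : ℕ) :
    wN π N (Fin.last d) = 0 := by
  apply Finset.sum_eq_zero
  intro t _
  rw [if_neg (kk_ne hd (good_iter hd h t)).symm]

theorem nx_iter (hd : 0 < d) {π : Fin (d + 1) → Fin (d + 1)} (h : Good π) (q : Fin (d + 1) → ℝ)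
    (N : ℕ) : (nx true)^[N] (π, q) =
      ((st true)^[N] π, fun i => q i + wN π N i * q (Fin.last d)) := by
  induction N with
  | zero => simp [wN]
  | succ n ih =>
    rw [Function.iterate_succ_apply', ih, nx, Function.iterate_succ_apply']
    congr 1
    funext i
    have hw := wN_last hd h n
    change Function.update _ (kk ((st true)^[n] π)) _ i = _
    rw [Function.update_apply]
    have : wN π (n + 1) i = wN π n i + if i = kk ((st true)^[n] π) then 1 else 0 :=
      Finset.sum_range_succ _ _
    rw [this]
    split_ifs with hi
    · simp only [wn, cond_true, hw, ls]
      rw [← hi]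
      push_cast
      ring
    · simp

theorem wN_mono (π : Fin (d + 1) → Fin (d + 1)) {N M : ℕ} (h : N ≤ M) (i) : wN π N i ≤ wN π M i :=
  Finset.sum_le_sum_of_subset (Finset.range_mono h)

theorem wN_large (hd : 0 < d) {π : Fin (d + 1) → Fin (d + 1)} (h : Good π)
    (hs : π (Fin.last d) = 0) (n : ℕ) : ∃ N, ∀ x, x ≠ Fin.last d → n ≤ wN π N x := by
  have H : ∀ x, ∃ N, x ≠ Fin.last d → n ≤ wN π N x := by
    intro x
    by_cases hx : x = Fin.last d
    · exact ⟨0, fun h => absurd hx h⟩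
    induction n with
    | zero => exact ⟨0, fun _ => Nat.zero_le _⟩
    | succ n ih =>
      obtain ⟨N, hN⟩ := ih
      have hg := good_iter hd h N
      obtain ⟨i, hi, -⟩ := cycA (x := x) _ (π := (st true)^[N] π) (by
        rw [last_iter, hs]
        apply Fin.pos_of_ne_zero
        intro h0
        apply hx
        apply hg.1.1
        rw [h0, last_iter, hs]) rfl
      rw [← Function.iterate_add_apply] at hi
      have hk := kk_eq (good_iter hd h (i + N)).1.1 hi
      refine ⟨i + N + 1, fun _ => ?_⟩
      have : wN π (i + N + 1) x = wN π (i + N) x + if x = kk ((st true)^[i + N] π) then 1 else 0 :=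
        Finset.sum_range_succ _ _
      rw [this, if_pos hk.symm]
      have := wN_mono π (Nat.le_add_left N i) x
      have := hN hx
      omega
  choose N hN using H
  refine ⟨∑ x, N x, fun x hx => (hN x hx).trans (wN_mono π ?_ x)⟩
  exact Finset.single_le_sum (fun i _ => Nat.zero_le _) (Finset.mem_univ x)

theorem bal_iter (N : ℕ) : ∀ K : ℝ, 1 ≤ K → ∃ R : ℝ, 1 ≤ R ∧ ∀ s : Sta d, Val π₀ s → Bal K s.2 →
    Hits π₀ {(nx true)^[N] s} (1 / R) s := by
  induction N with
  | zero =>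
    intro K hK
    exact ⟨1, le_rfl, fun s hv _ => hits_mem rfl hv (by norm_num)⟩
  | succ n ih =>
    intro K hK
    obtain ⟨R, hR, h⟩ := ih (2 * K) (by linarith)
    refine ⟨(1 + K) * R, by nlinarith, fun s hv hb => ?_⟩
    rw [Function.iterate_succ_apply]
    exact bal_step hK hR true hv hb (h _ (val_nx true hv) (bal_nx hK true hv.2 hb))

/-- comparison: key target set reached from everywhere -/
theorem target (hd : 0 < d) (h0 : Good π₀) : ∃ K : ℝ, 1 ≤ K ∧ ∀ n : ℕ, 0 < n →
    ∃ (π : Fin (d + 1) → Fin (d + 1)) (v : Fin (d + 1) → ℝ) (c : ℝ), Val π₀ (π, v) ∧ 0 < c ∧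
    ∀ s : Sta d, Val π₀ s → Hits π₀ {t | t.1 = π ∧ ∃ a : ℝ, 0 < a ∧ ∀ i, v i * a ≤ t.2 i ∧
      t.2 i ≤ (1 + K / n) * (v i * a)} c s := by
  obtain ⟨π', hm, hs⟩ := exists_star hd h0
  obtain ⟨K, hK, hb⟩ := bal_hit hd h0 hm
  refine ⟨K, hK, fun n hn => ?_⟩
  have hg := mem_good hd h0 hm
  obtain ⟨N, hN⟩ := wN_large hd hg hs n
  obtain ⟨R, hR, hi⟩ := bal_iter (d := d) (π₀ := π₀) N K hK
  have hn' : (0 : ℝ) < n := by exact_mod_cast hn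
  have hN' : ∀ x, x ≠ Fin.last d → (n : ℝ) ≤ wN π' N x := fun x hx => by exact_mod_cast hN x hx
  refine ⟨(st true)^[N] π', fun i => if i = Fin.last d then 1 else wN π' N i, 1 / K * (1 / R),
    ⟨mem_of_rch hm (rch_iter true N π'), ?_⟩, by positivity, fun s hv => ?_⟩
  · intro i
    dsimp only
    split_ifs with h
    · norm_num
    · linarith [hN' i h]
  · refine hits_trans (hb s hv) (by positivity) ?_
    rintro ⟨π, q⟩ ⟨rfl, hbt⟩ hvt
    dsimp only at hbt hg hN'
    refine hits_mono (hi _ hvt hbt) ?_ le_rfl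
    intro u hu _
    rw [Set.mem_singleton_iff.1 hu, nx_iter hd hg]
    have hql := hvt.2 (Fin.last d)
    refine ⟨rfl, q (Fin.last d), hql, fun i => ?_⟩
    have hqi := hvt.2 i
    dsimp only at hql hqi ⊢
    have hKn : 0 < K / n := by positivity
    split_ifs with h
    · subst h
      rw [wN_last hd hg]
      constructor
      · simp
      · simp; nlinarith
    · have h1 := hN' i h
      refine ⟨by linarith, ?_⟩
      have h2 := hbt i (Fin.last d)
      have h3 : K ≤ K / n * wN π N i := by
        calc K = K / n * n := by field_simp
          _ ≤ _ := by gcongr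
      nlinarith

theorem liouville (hd : 0 < d) (h0 : Good π₀) (m : ℕ) (u : Sta d → ℝ)
    (hu0 : ∀ s, Val π₀ s → 0 ≤ u s) (hu1 : ∀ s, Val π₀ s → u s ≤ 1)
    (hh : ∀ s, Val π₀ s → pr true s * u (nx true s) + pr false s * u (nx false s) = u s)
    (hsc : ∀ s : Sta d, Val π₀ s → ∀ a : ℝ, 0 < a → u (s.1, fun i => a * s.2 i) = u s)
    (hcmp : ∀ π (q1 q2 : Fin (d + 1) → ℝ) (r : ℝ), Val π₀ (π, q1) → Val π₀ (π, q2) → 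
      (∀ i, q2 i ≤ q1 i) → (∀ i, q1 i ≤ r * q2 i) → u (π, q1) ≤ r ^ m * u (π, q2)) :
    ∃ C : ℝ, ∀ s, Val π₀ s → u s = C := by
  obtain ⟨K, hK, ht⟩ := target hd h0
  set A := u '' {s | Val π₀ s} with hA
  have hne : A.Nonempty := ⟨u (π₀, fun _ => 1), _, ⟨.base, fun _ => one_pos⟩, rfl⟩
  have hba : BddAbove A := ⟨1, by rintro _ ⟨s, hs, rfl⟩; exact hu1 s hs⟩
  have hbb : BddBelow A := ⟨0, by rintro _ ⟨s, hs, rfl⟩; exact hu0 s hs⟩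
  have hS : ∀ s, Val π₀ s → u s ≤ sSup A := fun s hs => le_csSup hba ⟨s, hs, rfl⟩
  have hI : ∀ s, Val π₀ s → sInf A ≤ u s := fun s hs => csInf_le hbb ⟨s, hs, rfl⟩
  have key : ∀ n : ℕ, 0 < n → sSup A ≤ (1 + K / n) ^ m * ((1 + K / n) ^ m * sInf A) := by
    intro n hn
    obtain ⟨π, v, c, hv, hc, hits⟩ := ht n hn
    have hn' : (0 : ℝ) < n := by exact_mod_cast hn
    set r := 1 + K / n with hr
    have hr0 : 0 < r := by positivity
    have hrm : 0 < r ^ m := pow_pos hr0 m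
    have va : ∀ a : ℝ, 0 < a → Val π₀ (π, fun i => a * v i) := fun a ha =>
      ⟨hv.1, fun i => mul_pos ha (hv.2 i)⟩
    have c1 : sSup A ≤ r ^ m * u (π, v) := by
      by_contra hcon
      push Not at hcon
      have : ∀ s, Val π₀ s → c * (sSup A - r ^ m * u (π, v)) ≤ sSup A - u s := by
        intro s hs
        refine hits s hs (fun s => sSup A - u s) ⟨fun s hs => sub_nonneg.2 (hS s hs), fun s hs => ?_⟩
          _ (by linarith) ?_
        · have e1 := hh s hs
          have e2 := pr_add hs.2
          have : pr true s * sSup A + pr false s * sSup A = sSup A := by rw [← add_mul, e2, one_mul]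
          dsimp only
          linarith
        · rintro ⟨_, q⟩ ⟨rfl, a, ha, hq⟩ hvt
          have := hcmp _ q (fun i => a * v i) r hvt (va a ha) (fun i => by
            rw [mul_comm]; exact (hq i).1) (fun i => by rw [mul_comm a]; exact (hq i).2)
          rw [hsc _ hv a ha] at this
          dsimp only at this ⊢
          linarith
      have h2 : sSup A ≤ sSup A - c * (sSup A - r ^ m * u (π, v)) := by
        apply csSup_le hne
        rintro _ ⟨s, hs, rfl⟩
        linarith [this s hs]
      nlinarith
    have c2 : u (π, v) ≤ r ^ m * sInf A := by
      by_contra hcon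
      push Not at hcon
      have : ∀ s, Val π₀ s → c * (u (π, v) / r ^ m - sInf A) ≤ u s - sInf A := by
        intro s hs
        refine hits s hs (fun s => u s - sInf A) ⟨fun s hs => sub_nonneg.2 (hI s hs), fun s hs => ?_⟩
          _ (by rw [sub_nonneg, le_div_iff₀ hrm]; linarith) ?_
        · have e1 := hh s hs
          have e2 := pr_add hs.2
          have : pr true s * sInf A + pr false s * sInf A = sInf A := by rw [← add_mul, e2, one_mul]
          dsimp only
          linarith
        · rintro ⟨π'', q⟩ ⟨rfl, a, ha, hq⟩ hvt
          have := hcmp _ (fun i => r * a * v i) q r (va _ (mul_pos hr0 ha)) hvt (fun i => by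
            have := (hq i).2; linarith) (fun i => by
            have := mul_le_mul_of_nonneg_left (hq i).1 hr0.le; linarith)
          rw [hsc _ hv _ (mul_pos hr0 ha)] at this
          dsimp only at this ⊢
          have h3 : u (π'', v) / r ^ m ≤ u (π'', q) := by rw [div_le_iff₀ hrm]; linarith
          linarith
      have h2 : sInf A + c * (u (π, v) / r ^ m - sInf A) ≤ sInf A := by
        apply le_csInf hne
        rintro _ ⟨s, hs, rfl⟩
        linarith [this s hs]
      have h3 : sInf A < u (π, v) / r ^ m := by rw [lt_div_iff₀ hrm]; linarith
      nlinarith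
    calc sSup A ≤ r ^ m * u (π, v) := c1
      _ ≤ _ := mul_le_mul_of_nonneg_left c2 hrm.le
  have hlim : Filter.Tendsto (fun n : ℕ => (1 + K / (n : ℝ)) ^ m * ((1 + K / (n : ℝ)) ^ m * sInf A))
      Filter.atTop (nhds ((1 + 0) ^ m * ((1 + 0) ^ m * sInf A))) := by
    have h1 := tendsto_const_div_atTop_nhds_zero_nat K
    have h2 := (h1.const_add 1).pow m
    exact h2.mul (h2.mul_const _)
  have hle : sSup A ≤ sInf A := by
    have := ge_of_tendsto hlim (Filter.eventually_atTop.2 ⟨1, fun n hn => key n hn⟩)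
    simpa using this
  exact ⟨sInf A, fun s hs => le_antisymm ((hS s hs).trans hle) (hI s hs)⟩

end VM

namespace VM
variable {d : ℕ} {π₀ : Fin (d + 1) → Fin (d + 1)}

/-- transvection -/
def tv (w l : Fin (d + 1)) (z : Fin (d + 1) → ℝ) : Fin (d + 1) → ℝ :=
  Function.update z w (z w + z l)

theorem tv_w (w l : Fin (d + 1)) (z : Fin (d + 1) → ℝ) : tv w l z w = z w + z l := by simp [tv]
theorem tv_ne {w l : Fin (d + 1)} (z : Fin (d + 1) → ℝ) {i} (h : i ≠ w) : tv w l z i = z i := by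
  simp [tv, h]

theorem cont_tv (w l : Fin (d + 1)) : Continuous (tv w l) := by
  unfold tv
  fun_prop

theorem mp_tv {w l : Fin (d + 1)} (h : w ≠ l) : MeasurePreserving (tv w l) volume volume := by
  have := Real.volume_preserving_transvectionStruct
    (⟨w, l, h, 1⟩ : Matrix.TransvectionStruct (Fin (d + 1)) ℝ)
  have e : tv w l = ⇑(Matrix.toLin' (⟨w, l, h, 1⟩ : Matrix.TransvectionStruct (Fin (d + 1)) ℝ).toMatrix) := by
    funext z
    funext i
    simp only [Matrix.TransvectionStruct.toMatrix, Matrix.transvection, Matrix.toLin'_apply,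
      Matrix.add_mulVec, Matrix.one_mulVec, Matrix.single_mulVec, Pi.add_apply]
    by_cases hi : i = w
    · subst hi; simp [tv]
    · simp [tv, hi]
  rw [e]
  exact this

theorem inj_tv {w l : Fin (d + 1)} (h : w ≠ l) : Function.Injective (tv w l) := by
  intro x y hxy
  have hl : x l = y l := by
    have := congrFun hxy l
    rwa [tv_ne _ h.symm, tv_ne _ h.symm] at this
  funext i
  by_cases hi : i = w
  · subst hi
    have := congrFun hxy i
    rw [tv_w, tv_w] at this
    linarith
  · have := congrFun hxy i
    rwa [tv_ne _ hi, tv_ne _ hi] at this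

theorem mp_perm (σ : Equiv.Perm (Fin (d + 1))) :
    MeasurePreserving (fun y : Fin (d + 1) → ℝ => y ∘ σ) volume volume := by
  have := volume_measurePreserving_piCongrLeft (fun _ : Fin (d + 1) => ℝ) σ.symm
  convert this using 1
  funext y
  funext i
  have := MeasurableEquiv.piCongrLeft_apply_apply (β := fun _ : Fin (d + 1) => ℝ) σ.symm y (σ i)
  rw [Equiv.symm_apply_apply] at this
  exact this.symm

/-- inverse branches -/
noncomputable def Bm (c : Bool) (π : Fin (d + 1) → Fin (d + 1)) (y : Fin (d + 1) → ℝ) :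
    Fin (d + 1) → ℝ := tv (wn c π) (ls c π) (y ∘ (sg c π).symm)

theorem mp_Bm (hd : 0 < d) (c : Bool) {π : Fin (d + 1) → Fin (d + 1)} (h : Good π) :
    MeasurePreserving (Bm c π) volume volume :=
  (mp_tv (wn_ne_ls hd c h)).comp (mp_perm _)

theorem emb_Bm (hd : 0 < d) (c : Bool) {π : Fin (d + 1) → Fin (d + 1)} (h : Good π) :
    MeasurableEmbedding (Bm c π) := by
  apply Continuous.measurableEmbedding
  · exact (cont_tv _ _).comp (by fun_prop)
  · apply (inj_tv (wn_ne_ls hd c h)).comp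
    exact (sg c π).symm.surjective.injective_comp_right

theorem sum_tv (w l : Fin (d + 1)) (q z : Fin (d + 1) → ℝ) :
    ∑ i, q i * tv w l z i = ∑ i, q i * z i + q w * z l := by
  rw [← Finset.add_sum_erase _ _ (Finset.mem_univ w),
    ← Finset.add_sum_erase _ (fun i => q i * z i) (Finset.mem_univ w), tv_w]
  rw [Finset.sum_congr rfl (fun i hi => by rw [tv_ne z (Finset.ne_of_mem_erase hi)])]
  ring

theorem sum_Bm (c : Bool) (π : Fin (d + 1) → Fin (d + 1)) (q y : Fin (d + 1) → ℝ) :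
    ∑ i, q i * Bm c π y i = ∑ i, qn c (π, q) i * y i := by
  have h1 : ∑ i, qn c (π, q) i * y i = ∑ i, tv (ls c π) (wn c π) q i * (y ∘ (sg c π).symm) i := by
    rw [← Equiv.sum_comp (sg c π) (fun i => tv (ls c π) (wn c π) q i * (y ∘ (sg c π).symm) i)]
    simp [qn, tv]
  rw [h1, Bm, sum_tv]
  simp_rw [mul_comm (tv _ _ _ _)]
  rw [sum_tv]
  simp_rw [mul_comm (q _)]

/-- positive cone -/
def cone (d : ℕ) : Set (Fin (d + 1) → ℝ) := {x | ∀ i, 0 < x i}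
/-- normalisation -/
noncomputable def nrm (x : Fin (d + 1) → ℝ) : Fin (d + 1) → ℝ := fun i => x i / ∑ j, x j

theorem meas_cone : MeasurableSet (cone d) := by
  have : cone d = ⋂ i, {x | 0 < x i} := by ext; simp [cone]
  rw [this]
  exact MeasurableSet.iInter fun i => measurableSet_lt measurable_const (measurable_pi_apply i)

theorem meas_nrm : Measurable (nrm (d := d)) := by unfold nrm; fun_prop

theorem cone_sum {x : Fin (d + 1) → ℝ} (h : x ∈ cone d) : 0 < ∑ i, x i :=
  Finset.sum_pos (fun i _ => h i) ⟨0, Finset.mem_univ _⟩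

theorem pre_Bm (hd : 0 < d) (c : Bool) {π : Fin (d + 1) → Fin (d + 1)} (h : Good π) :
    Bm c π ⁻¹' (cone d ∩ {x | x (ls c π) < x (wn c π)}) = cone d := by
  ext y
  have hne := wn_ne_ls hd c h
  simp only [Set.mem_preimage, Set.mem_inter_iff, Set.mem_ofPred_eq, Bm, cone]
  rw [tv_w, tv_ne _ hne.symm]
  constructor
  · rintro ⟨h1, h2⟩ i
    have hz : ∀ j, 0 < (y ∘ (sg c π).symm) j := by
      intro j
      by_cases hj : j = wn c π
      · subst hj; linarith
      · have := h1 j; rwa [tv_ne _ hj] at this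
    simpa using hz (sg c π i)
  · intro hy
    have hz : ∀ j, 0 < (y ∘ (sg c π).symm) j := fun j => hy _
    refine ⟨fun i => ?_, by linarith [hz (wn c π)]⟩
    by_cases hi : i = wn c π
    · subst hi; rw [tv_w]; exact add_pos (hz _) (hz _)
    · rw [tv_ne _ hi]; exact hz i

theorem P_Bm (hd : 0 < d) (c : Bool) {π : Fin (d + 1) → Fin (d + 1)} (h : Good π)
    {y : Fin (d + 1) → ℝ} (hy : y ∈ cone d) :
    rauzyInduction d (π, nrm (Bm c π y)) = (st c π, nrm y) := by
  have hne := wn_ne_ls hd c h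
  have hx : Bm c π y ∈ cone d ∩ {x | x (ls c π) < x (wn c π)} := by
    have : y ∈ Bm c π ⁻¹' (cone d ∩ {x | x (ls c π) < x (wn c π)}) := by rwa [pre_Bm hd c h]
    exact this
  have hX := cone_sum hx.1
  have hY := cone_sum hy
  have hsum : ∑ i, Bm c π y i = ∑ i, y i + y ((sg c π).symm (ls c π)) := by
    have := sum_tv (wn c π) (ls c π) (fun _ => 1) (y ∘ (sg c π).symm)
    simp only [one_mul] at this
    rw [Bm, this]
    simp only [Function.comp]
    rw [Equiv.sum_comp (sg c π).symm]
  have hl : Bm c π y (ls c π) = y ((sg c π).symm (ls c π)) := tv_ne _ hne.symm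
  have hw : Bm c π y (wn c π) = y ((sg c π).symm (wn c π)) + y ((sg c π).symm (ls c π)) := tv_w _ _ _
  have ho : ∀ i, i ≠ wn c π → Bm c π y i = y ((sg c π).symm i) := fun i hi => tv_ne _ hi
  have hlt : nrm (Bm c π y) (ls c π) < nrm (Bm c π y) (wn c π) :=
    div_lt_div_of_pos_right hx.2 hX
  have h1l : 1 - nrm (Bm c π y) (ls c π) = (∑ i, y i) / ∑ i, Bm c π y i := by
    rw [nrm, hl, eq_div_iff hX.ne', sub_mul, div_mul_cancel₀ _ hX.ne', hsum]; ring
  have hdiv : ∀ a, a / (∑ i, Bm c π y i) / ((∑ i, y i) / ∑ i, Bm c π y i) = a / ∑ i, y i := by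
    intro a; field_simp
  cases c
  · simp only [wn, ls, cond_false, sg] at *
    have hk : Function.invFun π (Fin.last d) = kk π := rfl
    unfold rauzyInduction
    simp only [hk]
    rw [if_neg (not_lt.2 hlt.le), if_pos hlt]
    refine Prod.ext rfl ?_
    funext j
    simp only
    rw [h1l]
    have hy' : nrm y j = y ((sgB (kk π)).symm (sgB (kk π) j)) / ∑ i, y i := by simp [nrm]
    rw [hy']
    have hs : sgB (kk π) j = if j ≤ kk π then j else if j = kk π + 1 then Fin.last d else j - 1 := rfl
    split_ifs with h1 h2 h3
    · subst h2
      rw [if_pos le_rfl] at hs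
      rw [hs, nrm, nrm, ← sub_div, hdiv, hw, hl, add_sub_cancel_right]
    · rw [if_pos h1] at hs
      rw [hs, nrm, hdiv, ho j h2]
    · rw [if_neg h1, if_pos h3] at hs
      rw [hs, nrm, hdiv, hl]
    · rw [if_neg h1, if_neg h3] at hs
      rw [hs, nrm, hdiv, ho]
      intro h4
      rw [h4] at hs
      have : sgB (kk π) j = sgB (kk π) (kk π) := by rw [sgB_self, hs]
      have := (sgB (kk π)).injective this
      exact h1 this.le
  · simp only [wn, ls, cond_true, sg] at *
    have hk : Function.invFun π (Fin.last d) = kk π := rfl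
    unfold rauzyInduction
    simp only [hk]
    rw [if_pos hlt]
    refine Prod.ext rfl ?_
    funext j
    simp only
    rw [h1l, Function.update_apply]
    have hy' : nrm y j = y j / ∑ i, y i := rfl
    rw [hy']
    split_ifs with h1
    · subst h1
      rw [nrm, nrm, ← sub_div, hdiv, hw, hl, add_sub_cancel_right]; rfl
    · rw [nrm, hdiv, ho j h1]; rfl

theorem null_eq (hd : 0 < d) {π : Fin (d + 1) → Fin (d + 1)} (h : Good π) :
    volume {x : Fin (d + 1) → ℝ | x (kk π) = x (Fin.last d)} = 0 := by
  let φ : (Fin (d + 1) → ℝ) →ₗ[ℝ] ℝ := LinearMap.proj (R := ℝ) (φ := fun _ => ℝ) (kk π) -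
    LinearMap.proj (R := ℝ) (φ := fun _ => ℝ) (Fin.last d)
  have : {x : Fin (d + 1) → ℝ | x (kk π) = x (Fin.last d)} = (LinearMap.ker φ : Set _) := by
    ext x; simp [φ, sub_eq_zero]
  rw [this]
  apply Measure.addHaar_submodule
  intro htop
  have : (Pi.single (kk π) (1 : ℝ)) ∈ LinearMap.ker φ := by rw [htop]; trivial
  simp [φ, Pi.single_apply, (kk_ne hd h).symm] at this

theorem CV (hd : 0 < d) {π : Fin (d + 1) → Fin (d + 1)} (h : Good π)
    (F : Sta d → ENNReal) (g : (Fin (d + 1) → ℝ) → ENNReal) :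
    ∫⁻ x in cone d, F (rauzyInduction d (π, nrm x)) * g x =
      (∫⁻ y in cone d, F (st true π, nrm y) * g (Bm true π y)) +
      ∫⁻ y in cone d, F (st false π, nrm y) * g (Bm false π y) := by
  have key : ∀ c, ∫⁻ x in cone d ∩ {x | x (ls c π) < x (wn c π)},
      F (rauzyInduction d (π, nrm x)) * g x =
      ∫⁻ y in cone d, F (st c π, nrm y) * g (Bm c π y) := by
    intro c
    rw [← (mp_Bm hd c h).setLIntegral_comp_preimage_emb (emb_Bm hd c h), pre_Bm hd c h]
    refine setLIntegral_congr_fun meas_cone fun y hy => ?_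
    rw [P_Bm hd c h hy]
  rw [← key, ← key]
  have hm : ∀ i j : Fin (d + 1), MeasurableSet {x : Fin (d + 1) → ℝ | x i < x j} := fun i j =>
    measurableSet_lt (measurable_pi_apply i) (measurable_pi_apply j)
  rw [← lintegral_union (meas_cone.inter (hm _ _))]
  · apply setLIntegral_congr
    have : cone d \ (cone d ∩ {x | x (ls true π) < x (wn true π)} ∪
      cone d ∩ {x | x (ls false π) < x (wn false π)}) ⊆
        {x : Fin (d + 1) → ℝ | x (kk π) = x (Fin.last d)} := by
      rintro x ⟨h1, h2⟩
      simp only [ls, wn, cond_true, cond_false, Set.mem_union, Set.mem_inter_iff, h1, true_and,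
        Set.mem_ofPred_eq, not_or, not_lt] at h2
      exact le_antisymm h2.2 h2.1
    symm
    rw [ae_eq_set]
    constructor
    · convert measure_empty (μ := volume)
      ext x; simp only [Set.mem_sdiff, Set.mem_union, Set.mem_inter_iff, Set.mem_empty_iff_false]
      tauto
    · exact measure_mono_null this (null_eq hd h)
  · rw [Set.disjoint_left]
    rintro x ⟨_, h1⟩ ⟨_, h2⟩
    exact lt_asymm (α := ℝ) (a := x (kk π)) (b := x (Fin.last d)) h1 h2

end VM

namespace VM
variable {d : ℕ} {π₀ : Fin (d + 1) → Fin (d + 1)}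

/-- chart of the simplex -/
def sn (u : Fin d → ℝ) : Fin (d + 1) → ℝ := Fin.snoc u (1 - ∑ i, u i)

/-- Lebesgue measure on the simplex -/
noncomputable def sig (d : ℕ) : Measure (Fin (d + 1) → ℝ) :=
  (Measure.map sn (volume : Measure (Fin d → ℝ))).restrict (openSimplex d)

theorem meas_snoc : Measurable (fun p : (Fin d → ℝ) × ℝ => (Fin.snoc p.1 p.2 : Fin (d + 1) → ℝ)) := by
  rw [measurable_pi_iff]
  intro i
  refine Fin.lastCases ?_ (fun j => ?_) i
  · simpa using measurable_snd
  · simp only [Fin.snoc_castSucc]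
    exact (measurable_pi_apply j).comp measurable_fst

theorem meas_sn : Measurable (sn (d := d)) :=
  meas_snoc.comp (measurable_id.prodMk (by fun_prop : Measurable fun u : Fin d → ℝ => 1 - ∑ i, u i))

theorem meas_simplex : MeasurableSet (openSimplex d) := by
  have : openSimplex d = cone d ∩ {l | ∑ i, l i = 1} := rfl
  rw [this]
  exact meas_cone.inter (measurableSet_eq_fun (by fun_prop) (by fun_prop))

theorem sn_sum (u : Fin d → ℝ) : ∑ i, sn u i = 1 := by
  simp [sn, Fin.sum_univ_castSucc]

theorem nrm_smul {w : Fin (d + 1) → ℝ} (hw : w ∈ openSimplex d) {s : ℝ} (hs : 0 < s) :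
    nrm (s • w) = w := by
  funext i
  simp only [nrm, Pi.smul_apply, smul_eq_mul, ← Finset.mul_sum, hw.2]
  field_simp

theorem lint_smul (f : (Fin d → ℝ) → ENNReal) (hf : Measurable f) {s : ℝ} (hs : 0 < s) :
    ∫⁻ u, f u = ENNReal.ofReal (s ^ d) * ∫⁻ u, f (s • u) := by
  have h1 : ∫⁻ u, f (s • u) = ∫⁻ u, f u ∂(Measure.map (fun x => s • x) volume) :=
    (lintegral_map hf (measurable_const_smul s)).symm
  rw [h1, Measure.map_addHaar_smul _ hs.ne', lintegral_smul_measure, smul_eq_mul, ← mul_assoc,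
    ← ENNReal.ofReal_mul (by positivity)]
  have : s ^ d * |(s ^ Module.finrank ℝ (Fin d → ℝ))⁻¹| = 1 := by
    rw [Module.finrank_fin_fun, abs_of_pos (by positivity)]
    field_simp
  rw [this]; simp

theorem lint_snoc (H : (Fin (d + 1) → ℝ) → ENNReal) (hH : Measurable H) :
    ∫⁻ x, H x = ∫⁻ u : Fin d → ℝ, ∫⁻ t : ℝ, H (Fin.snoc u t) := by
  have mp := volume_preserving_piFinSuccAbove (fun _ : Fin (d + 1) => ℝ) (Fin.last d)
  have h1 := (mp.symm).lintegral_comp_emb (MeasurableEquiv.measurableEmbedding _) H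
  rw [← h1]
  have e : ∀ p : ℝ × (Fin d → ℝ), (MeasurableEquiv.piFinSuccAbove (fun _ : Fin (d + 1) => ℝ)
      (Fin.last d)).symm p = Fin.snoc p.2 p.1 := fun p => Fin.insertNth_last' p.1 p.2
  have h2 := lintegral_prod_symm (μ := (volume : Measure ℝ)) (ν := (volume : Measure (Fin d → ℝ)))
    (fun p => H ((MeasurableEquiv.piFinSuccAbove (fun _ : Fin (d + 1) => ℝ)
      (Fin.last d)).symm p)) (hH.comp (MeasurableEquiv.measurable _)).aemeasurable
  refine (Eq.trans ?_ h2).trans ?_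
  · rfl
  · simp only [e]

theorem polar (G : (Fin (d + 1) → ℝ) → ENNReal) (hG : Measurable G) :
    ∫⁻ x in cone d, G x =
      ∫⁻ w, (∫⁻ s in Set.Ioi (0 : ℝ), ENNReal.ofReal (s ^ d) * G (s • w)) ∂(sig d) := by
  set H := (cone d).indicator G with hHdef
  have hH : Measurable H := hG.indicator meas_cone
  rw [← lintegral_indicator meas_cone, lint_snoc _ hH]
  have h1 : ∀ u : Fin d → ℝ, ∫⁻ t : ℝ, H (Fin.snoc u t) = ∫⁻ s : ℝ, H (Fin.snoc u (s - ∑ i, u i)) :=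
    fun u => (lintegral_sub_right_eq_self (fun t => H (Fin.snoc u t)) (∑ i, u i)).symm
  simp_rw [h1]
  have m1 : Measurable (fun p : (Fin d → ℝ) × ℝ => (p.1, p.2 - ∑ i, p.1 i)) := by fun_prop
  rw [lintegral_lintegral_swap (f := fun (u : Fin d → ℝ) (s : ℝ) => H (Fin.snoc u (s - ∑ i, u i)))
    (hH.comp (meas_snoc.comp m1)).aemeasurable]
  have h2 : ∀ s : ℝ, ∫⁻ u : Fin d → ℝ, H (Fin.snoc u (s - ∑ i, u i)) =
      (Set.Ioi (0 : ℝ)).indicator (fun s => ∫⁻ u, ENNReal.ofReal (s ^ d) * H (s • sn u)) s := by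
    intro s
    by_cases hs : 0 < s
    · have hm1 : Measurable (fun u => H (s • sn (d := d) u)) :=
        hH.comp ((measurable_const_smul s).comp meas_sn)
      have hm2 : Measurable (fun u : Fin d → ℝ => H (Fin.snoc u (s - ∑ i, u i))) :=
        hH.comp (meas_snoc.comp (m1.comp (measurable_id.prodMk measurable_const)))
      rw [Set.indicator_of_mem (show s ∈ Set.Ioi (0 : ℝ) from hs), lintegral_const_mul _ hm1,
        lint_smul _ hm2 hs]
      congr 2
      funext u
      congr 1
      funext i
      refine Fin.lastCases ?_ (fun j => ?_) i
      · simp [sn, ← Finset.mul_sum]; ring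
      · simp [sn]
    · rw [Set.indicator_of_notMem (show s ∉ Set.Ioi (0 : ℝ) from hs)]
      have : ∀ u : Fin d → ℝ, H (Fin.snoc u (s - ∑ i, u i)) = 0 := by
        intro u
        apply Set.indicator_of_notMem
        intro hc
        have := cone_sum hc
        rw [Fin.sum_univ_castSucc] at this
        simp at this
        exact hs this
      simp [this]
  simp_rw [h2]
  rw [lintegral_indicator measurableSet_Ioi]
  have m2 : Measurable (fun p : ℝ × (Fin (d + 1) → ℝ) => ENNReal.ofReal (p.1 ^ d) * G (p.1 • p.2)) := by
    have : Measurable (fun p : ℝ × (Fin (d + 1) → ℝ) => p.1 • p.2) := by fun_prop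
    exact (by fun_prop : Measurable fun p : ℝ × (Fin (d + 1) → ℝ) => ENNReal.ofReal (p.1 ^ d)).mul
      (hG.comp this)
  have m2' : Measurable (fun p : ℝ × (Fin (d + 1) → ℝ) => ENNReal.ofReal (p.1 ^ d) * H (p.1 • p.2)) := by
    have : Measurable (fun p : ℝ × (Fin (d + 1) → ℝ) => p.1 • p.2) := by fun_prop
    exact (by fun_prop : Measurable fun p : ℝ × (Fin (d + 1) → ℝ) => ENNReal.ofReal (p.1 ^ d)).mul
      (hH.comp this)
  rw [lintegral_lintegral_swap (f := fun (s : ℝ) (u : Fin d → ℝ) => ENNReal.ofReal (s ^ d) * H (s • sn u))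
    (m2'.comp (measurable_fst.prodMk (meas_sn.comp measurable_snd))).aemeasurable]
  have m3 : Measurable (fun w : Fin (d + 1) → ℝ =>
      ∫⁻ s in Set.Ioi (0 : ℝ), ENNReal.ofReal (s ^ d) * G (s • w)) :=
    (m2.comp measurable_swap).lintegral_prod_right'
  rw [sig, ← lintegral_indicator meas_simplex, lintegral_map (m3.indicator meas_simplex) meas_sn]
  apply lintegral_congr
  intro u
  by_cases hu : sn u ∈ openSimplex d
  · rw [Set.indicator_of_mem hu]
    refine setLIntegral_congr_fun measurableSet_Ioi fun s hs => ?_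
    have : s • sn u ∈ cone d := fun i => mul_pos hs (hu.1 i)
    simp only [hHdef]
    rw [Set.indicator_of_mem this]
  · rw [Set.indicator_of_notMem hu]
    rw [← lintegral_zero (μ := volume.restrict (Set.Ioi (0 : ℝ)))]
    refine setLIntegral_congr_fun measurableSet_Ioi fun s hs => ?_
    have : s • sn u ∉ cone d := fun hc => hu ⟨fun i => by
      have := hc i
      exact pos_of_mul_pos_right this (le_of_lt hs), sn_sum u⟩
    simp only [hHdef]
    rw [Set.indicator_of_notMem this, mul_zero]

theorem gam {l : ℝ} (hl : 0 < l) : ∫⁻ s in Set.Ioi (0 : ℝ), ENNReal.ofReal (s ^ d * Real.exp (-(l * s)))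
    = ENNReal.ofReal (d.factorial / l ^ (d + 1)) := by
  have h1 := Real.integral_rpow_mul_exp_neg_mul_Ioi (a := (d : ℝ) + 1) (by positivity) hl
  simp only [add_sub_cancel_right, Real.rpow_natCast, Real.Gamma_nat_eq_factorial] at h1
  have h2 : (1 / l) ^ ((d : ℝ) + 1) * d.factorial = d.factorial / l ^ (d + 1) := by
    have : ((d : ℝ) + 1) = ((d + 1 : ℕ) : ℝ) := by push_cast; ring
    rw [this, Real.rpow_natCast, one_div, inv_pow]; field_simp
  rw [h2] at h1
  rw [← h1, ofReal_integral_eq_lintegral_ofReal]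
  · apply not_imp_comm.1 integral_undef
    rw [h1]; positivity
  · refine (ae_restrict_iff' measurableSet_Ioi).2 (Filter.Eventually.of_forall fun s hs => ?_)
    have : (0 : ℝ) < s := hs
    simp only [Pi.zero_apply]
    positivity

open Classical in
/-- the Rauzy class as a finite set -/
noncomputable def Rc (π₀ : Fin (d + 1) → Fin (d + 1)) : Finset (Fin (d + 1) → Fin (d + 1)) :=
  Finset.univ.filter (MemRauzyClass d π₀)

theorem mem_Rc {π : Fin (d + 1) → Fin (d + 1)} : π ∈ Rc π₀ ↔ MemRauzyClass d π₀ π := by simp [Rc]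

theorem ref_lint {f : Sta d → ENNReal} (hf : Measurable f) :
    ∫⁻ p, f p ∂(rauzyRefMeasure d π₀) =
      ∑ π ∈ Rc π₀, ∫⁻ w, f (π, w) ∂(sig d) := by
  classical
  rw [Rc, Finset.sum_filter]
  have hms : MeasurableSet ({π | MemRauzyClass d π₀ π} ×ˢ openSimplex d) :=
    (Set.to_countable _).measurableSet.prod meas_simplex
  have hmap : Measurable (fun p : (Fin (d + 1) → Fin (d + 1)) × (Fin d → ℝ) =>
        ((p.1, Fin.snoc p.2 (1 - ∑ i, p.2 i)) : Sta d)) :=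
    measurable_fst.prodMk (meas_sn.comp measurable_snd)
  rw [rauzyRefMeasure, ← lintegral_indicator hms, lintegral_map (hf.indicator hms) hmap,
    lintegral_prod (fun a : (Fin (d + 1) → Fin (d + 1)) × (Fin d → ℝ) =>
      ({π | MemRauzyClass d π₀ π} ×ˢ openSimplex d).indicator f
        (a.1, Fin.snoc a.2 (1 - ∑ i, a.2 i))) ((hf.indicator hms).comp hmap).aemeasurable, lintegral_count, tsum_fintype]
  apply Finset.sum_congr rfl
  intro π _
  have hfπ : Measurable fun w => f (π, w) := hf.comp (measurable_const.prodMk measurable_id)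
  split_ifs with h
  · rw [sig, ← lintegral_indicator meas_simplex, lintegral_map (hfπ.indicator meas_simplex) meas_sn]
    apply lintegral_congr
    intro u
    change _ = (openSimplex d).indicator _ (Fin.snoc u (1 - ∑ i, u i))
    by_cases hu : (Fin.snoc u (1 - ∑ i, u i) : Fin (d + 1) → ℝ) ∈ openSimplex d
    · rw [Set.indicator_of_mem hu, Set.indicator_of_mem]
      exact ⟨h, hu⟩
    · rw [Set.indicator_of_notMem hu, Set.indicator_of_notMem]
      exact fun hh => hu hh.2
  · rw [← lintegral_zero (μ := (volume : Measure (Fin d → ℝ)))]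
    apply lintegral_congr
    intro u
    rw [Set.indicator_of_notMem]
    exact fun hh => h hh.1

theorem meas_P : Measurable (rauzyInduction d) := by
  apply measurable_from_prod_countable_right
  intro π
  unfold rauzyInduction
  dsimp only
  have hm : ∀ i j : Fin (d + 1), MeasurableSet {x : Fin (d + 1) → ℝ | x i < x j} := fun i j =>
    measurableSet_lt (measurable_pi_apply i) (measurable_pi_apply j)
  refine Measurable.ite (hm _ _) (measurable_const.prodMk ?_) (Measurable.ite (hm _ _)
    (measurable_const.prodMk ?_) (measurable_const.prodMk measurable_id))
  · fun_prop
  · rw [measurable_pi_iff]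
    intro j
    split_ifs <;> fun_prop

theorem ae_sig : ∀ᵐ w ∂(sig d), w ∈ openSimplex d := ae_restrict_mem meas_simplex

/-- the homogeneous polar formula -/
theorem hom_polar {F : (Fin (d + 1) → ℝ) → ENNReal} (hF : Measurable F)
    {ρ : (Fin (d + 1) → ℝ) → ENNReal} (hρ : Measurable ρ)
    (hh : ∀ x ∈ cone d, ∀ s : ℝ, 0 < s → ρ (s • x) = ENNReal.ofReal ((s ^ (d + 1))⁻¹) * ρ x)
    {q : Fin (d + 1) → ℝ} (hq : ∀ i, 0 < q i) :
    ∫⁻ x in cone d, F (nrm x) * (ρ x * ENNReal.ofReal ((∑ i, q i * x i) ^ (d + 1) *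
      Real.exp (-∑ i, q i * x i))) = ENNReal.ofReal d.factorial * ∫⁻ w, F w * ρ w ∂(sig d) := by
  have hG : Measurable (fun x => F (nrm x) * (ρ x * ENNReal.ofReal ((∑ i, q i * x i) ^ (d + 1) *
      Real.exp (-∑ i, q i * x i)))) := (hF.comp meas_nrm).mul (hρ.mul (by fun_prop))
  rw [polar _ hG]
  have hFρ : Measurable (fun w => F w * ρ w) := hF.mul hρ
  rw [← lintegral_const_mul _ hFρ]
  apply lintegral_congr_ae
  filter_upwards [ae_sig] with w hw
  have hwc : w ∈ cone d := hw.1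
  set l := ∑ i, q i * w i with hl
  have hl0 : 0 < l := Finset.sum_pos (fun i _ => mul_pos (hq i) (hwc i)) ⟨0, Finset.mem_univ _⟩
  have e : ∀ s ∈ Set.Ioi (0 : ℝ), ENNReal.ofReal (s ^ d) * (F (nrm (s • w)) * (ρ (s • w) *
      ENNReal.ofReal ((∑ i, q i * (s • w) i) ^ (d + 1) * Real.exp (-∑ i, q i * (s • w) i)))) =
      (F w * ρ w * ENNReal.ofReal (l ^ (d + 1))) * ENNReal.ofReal (s ^ d * Real.exp (-(l * s))) := by
    intro s hs
    have hs0 : (0 : ℝ) < s := hs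
    have hsum : ∑ i, q i * (s • w) i = s * l := by
      rw [hl, Finset.mul_sum]; apply Finset.sum_congr rfl; intro i _; simp; ring
    rw [nrm_smul hw hs, hh w hwc s hs, hsum]
    have e2 : s ^ d * Real.exp (-(l * s)) * l ^ (d + 1) =
      s ^ d * ((s ^ (d + 1))⁻¹ * ((s * l) ^ (d + 1) * Real.exp (-(s * l)))) := by
      rw [mul_comm l s, mul_pow]; field_simp
    have e3 := congrArg ENNReal.ofReal e2
    rw [ENNReal.ofReal_mul (p := s ^ d * Real.exp (-(l * s))) (by positivity),
      ENNReal.ofReal_mul (p := s ^ d) (q := (s ^ (d + 1))⁻¹ * ((s * l) ^ (d + 1) *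
      Real.exp (-(s * l)))) (by positivity),
      ENNReal.ofReal_mul (p := (s ^ (d + 1))⁻¹) (by positivity)] at e3
    calc _ = F w * ρ w * (ENNReal.ofReal (s ^ d) * (ENNReal.ofReal (s ^ (d + 1))⁻¹ *
          ENNReal.ofReal ((s * l) ^ (d + 1) * Real.exp (-(s * l))))) := by ring
      _ = _ := by rw [← e3]; ring
  rw [setLIntegral_congr_fun measurableSet_Ioi e, lintegral_const_mul _ (by fun_prop), gam hl0,
    mul_assoc, ← ENNReal.ofReal_mul (by positivity), mul_comm]
  congr 2
  field_simp

/-- exponential form -/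
theorem exp_polar {F : (Fin (d + 1) → ℝ) → ENNReal} (hF : Measurable F) :
    ∫⁻ x in cone d, F (nrm x) * ENNReal.ofReal (Real.exp (-∑ i, x i)) =
      ENNReal.ofReal d.factorial * ∫⁻ w, F w ∂(sig d) := by
  have h := hom_polar hF (ρ := fun x => ENNReal.ofReal (((∑ i, x i) ^ (d + 1))⁻¹))
    (by fun_prop) (fun x hx s hs => ?_) (q := fun _ => 1) (fun _ => one_pos)
  · simp only [one_mul] at h
    have e1 : ∫⁻ w, F w * ENNReal.ofReal (((∑ i, w i) ^ (d + 1))⁻¹) ∂(sig d) = ∫⁻ w, F w ∂(sig d) := by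
      apply lintegral_congr_ae
      filter_upwards [ae_sig] with w hw
      rw [hw.2]; simp
    rw [← e1, ← h]
    refine setLIntegral_congr_fun meas_cone fun x hx => ?_
    have := cone_sum hx
    rw [← ENNReal.ofReal_mul (by positivity)]
    congr 2
    field_simp
  · rw [← ENNReal.ofReal_mul (by positivity)]
    congr 1
    simp only [Pi.smul_apply, smul_eq_mul, ← Finset.mul_sum]
    rw [mul_pow, mul_inv]

end VM

namespace VM
variable {d : ℕ} {π₀ : Fin (d + 1) → Fin (d + 1)}

theorem lap {q : Fin (d + 1) → ℝ} (hq : ∀ i, 0 < q i) :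
    ∫⁻ x in cone d, ENNReal.ofReal (Real.exp (-∑ i, q i * x i)) = ENNReal.ofReal (∏ i, q i)⁻¹ := by
  set f : Fin (d + 1) → ℝ → ℝ := fun i => (Set.Ioi (0 : ℝ)).indicator (fun t => Real.exp (-q i * t))
  have h1 := integral_fintype_prod_volume_eq_prod (𝕜 := ℝ) (ι := Fin (d + 1)) (E := fun _ => ℝ) f
  have h2 : ∀ i, ∫ x, f i x = (q i)⁻¹ := by
    intro i
    rw [integral_indicator measurableSet_Ioi, integral_exp_mul_Ioi (by linarith [hq i])]
    simp
  have h0 : 0 < (∏ i, q i)⁻¹ := inv_pos.2 (Finset.prod_pos fun i _ => hq i)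
  simp_rw [h2, Finset.prod_inv_distrib] at h1
  have h3 : ∀ x : Fin (d + 1) → ℝ, ENNReal.ofReal (∏ i, f i (x i)) =
      (cone d).indicator (fun x => ENNReal.ofReal (Real.exp (-∑ i, q i * x i))) x := by
    intro x
    by_cases hx : x ∈ cone d
    · rw [Set.indicator_of_mem hx]
      congr 1
      rw [← Finset.sum_neg_distrib, Real.exp_sum]
      apply Finset.prod_congr rfl
      intro i _
      simp only [f]
      rw [Set.indicator_of_mem (show x i ∈ Set.Ioi (0 : ℝ) from hx i)]
      congr 1; ring
    · rw [Set.indicator_of_notMem hx]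
      have : ∃ i, ¬ 0 < x i := by
        by_contra hc; push Not at hc; exact hx hc
      obtain ⟨i, hi⟩ := this
      rw [Finset.prod_eq_zero (Finset.mem_univ i)]
      · simp
      · exact Set.indicator_of_notMem hi _
  rw [← lintegral_indicator meas_cone, ← lintegral_congr h3, ← h1, ofReal_integral_eq_lintegral_ofReal]
  · apply not_imp_comm.1 integral_undef
    rw [h1]; exact h0.ne'
  · refine Filter.Eventually.of_forall fun x => Finset.prod_nonneg fun i _ => ?_
    exact Set.indicator_nonneg (fun t _ => (Real.exp_pos _).le) _

/-- exponential weight -/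
noncomputable def ew (q x : Fin (d + 1) → ℝ) : ENNReal := ENNReal.ofReal (Real.exp (-∑ i, q i * x i))

theorem meas_ew (q : Fin (d + 1) → ℝ) : Measurable (ew q) := by unfold ew; fun_prop

/-- expectation of `f` under the exponential law with rates `s.2` -/
noncomputable def U (f : Sta d → ENNReal) (s : Sta d) : ENNReal :=
  ENNReal.ofReal (∏ i, s.2 i) * ∫⁻ x in cone d, f (s.1, nrm x) * ew s.2 x

theorem U_mono {f g : Sta d → ENNReal} {s : Sta d} (h : ∀ x ∈ openSimplex d, f (s.1, x) ≤ g (s.1, x)) :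
    U f s ≤ U g s := by
  refine mul_le_mul_right (setLIntegral_mono' meas_cone fun x hx => ?_) _
  refine mul_le_mul_left (h _ ⟨fun i => div_pos (hx i) (cone_sum hx), ?_⟩) _
  have := cone_sum hx
  simp only [nrm, ← Finset.sum_div]
  field_simp

theorem U_one {s : Sta d} (hs : ∀ i, 0 < s.2 i) : U (fun _ => 1) s = 1 := by
  have h0 : 0 < (∏ i, s.2 i) := Finset.prod_pos fun i _ => hs i
  simp only [U, one_mul, ew]
  rw [lap hs, ← ENNReal.ofReal_mul h0.le, mul_inv_cancel₀ h0.ne', ENNReal.ofReal_one]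

theorem U_le {f : Sta d → ENNReal} (hf : ∀ t, f t ≤ 1) {s : Sta d} (hs : ∀ i, 0 < s.2 i) : U f s ≤ 1 := by
  rw [← U_one hs]
  exact U_mono fun x _ => hf _

theorem prod_qn (hd : 0 < d) (c : Bool) {s : Sta d} (h : Good s.1) :
    (∏ i, qn c s i) * s.2 (ls c s.1) = (∏ i, s.2 i) * (s.2 (ls c s.1) + s.2 (wn c s.1)) := by
  have e : ∏ i, qn c s i = ∏ i, Function.update s.2 (ls c s.1) (s.2 (ls c s.1) + s.2 (wn c s.1)) i :=
    Equiv.prod_comp (sg c s.1) (Function.update s.2 (ls c s.1) (s.2 (ls c s.1) + s.2 (wn c s.1)))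
  rw [e, Finset.prod_update_of_mem (Finset.mem_univ _),
    ← Finset.mul_prod_erase _ _ (Finset.mem_univ (ls c s.1)), Finset.sdiff_singleton_eq_erase]
  ring

theorem U_step (hd : 0 < d) {s : Sta d} (h : Good s.1) (hs : ∀ i, 0 < s.2 i) (f : Sta d → ENNReal) :
    U (fun t => f (rauzyInduction d t)) s =
      ENNReal.ofReal (pr true s) * U f (nx true s) + ENNReal.ofReal (pr false s) * U f (nx false s) := by
  have key : ∀ c, ENNReal.ofReal (∏ i, s.2 i) * ∫⁻ y in cone d, f (st c s.1, nrm y) * ew s.2 (Bm c s.1 y)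
      = ENNReal.ofReal (pr c s) * U f (nx c s) := by
    intro c
    have e1 : ∀ y, ew s.2 (Bm c s.1 y) = ew (nx c s).2 y := by
      intro y
      unfold ew nx
      rw [sum_Bm]
    have e2 : ∏ i, s.2 i = pr c s * ∏ i, (nx c s).2 i := by
      have := prod_qn hd c h
      have h1 := hs (ls c s.1)
      have h2 := hs (wn c s.1)
      simp only [nx, pr]
      field_simp
      linarith
    simp only [e1]
    rw [e2, ENNReal.ofReal_mul (pr_pos c hs).le, U, mul_assoc]
    rfl
  rw [← key, ← key, ← mul_add, ← CV hd h f (ew s.2)]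
  rfl

theorem U_scale (f : Sta d → ENNReal) (hf : Measurable f) (s : Sta d) {a : ℝ} (ha : 0 < a) :
    U f (s.1, fun i => a * s.2 i) = U f s := by
  have hm : Measurable (fun x => (cone d).indicator (fun x => f (s.1, nrm x) * ew s.2 x) x) := by
    apply Measurable.indicator _ meas_cone
    exact (hf.comp (measurable_const.prodMk meas_nrm)).mul (meas_ew _)
  unfold U
  rw [← lintegral_indicator meas_cone, ← lintegral_indicator meas_cone, lint_smul _ hm ha, ← mul_assoc,
    mul_comm (ENNReal.ofReal (∏ i, s.2 i)), ← ENNReal.ofReal_mul (by positivity)]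
  congr 1
  · congr 1
    simp [Finset.prod_mul_distrib]
  · apply lintegral_congr
    intro x
    have hc : a • x ∈ cone d ↔ x ∈ cone d := by
      simp only [cone, Set.mem_ofPred_eq, Pi.smul_apply, smul_eq_mul]
      exact forall_congr' fun i => mul_pos_iff_of_pos_left ha
    by_cases hx : x ∈ cone d
    · rw [Set.indicator_of_mem hx, Set.indicator_of_mem (hc.2 hx)]
      congr 1
      · congr 2
        funext i
        simp only [nrm, Pi.smul_apply, smul_eq_mul, ← Finset.mul_sum]
        have := cone_sum hx
        field_simp
      · unfold ew
        congr 3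
        apply Finset.sum_congr rfl
        intro i _
        simp only [Pi.smul_apply, smul_eq_mul]
        ring
    · rw [Set.indicator_of_notMem hx, Set.indicator_of_notMem (fun h => hx (hc.1 h))]

theorem U_cmp (f : Sta d → ENNReal) (π : Fin (d + 1) → Fin (d + 1)) {q1 q2 : Fin (d + 1) → ℝ} {r : ℝ}
    (h1 : ∀ i, 0 < q1 i) (h2 : ∀ i, 0 < q2 i) (h : ∀ i, q2 i ≤ q1 i) (h' : ∀ i, q1 i ≤ r * q2 i) :
    U f (π, q1) ≤ ENNReal.ofReal (r ^ (d + 1)) * U f (π, q2) := by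
  have hr : 0 ≤ r := by
    have := h' 0
    by_contra hc
    push Not at hc
    nlinarith [h1 0, h2 0]
  unfold U
  rw [← mul_assoc, ← ENNReal.ofReal_mul (by positivity)]
  refine mul_le_mul' (ENNReal.ofReal_le_ofReal ?_) ?_
  · calc ∏ i, q1 i ≤ ∏ i, (r * q2 i) := Finset.prod_le_prod (fun i _ => (h1 i).le) (fun i _ => h' i)
      _ = _ := by simp [Finset.prod_mul_distrib]
  · refine setLIntegral_mono' meas_cone fun x hx => ?_
    refine mul_le_mul_right (ENNReal.ofReal_le_ofReal (Real.exp_le_exp.2 (neg_le_neg ?_))) _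
    exact Finset.sum_le_sum fun i _ => mul_le_mul_of_nonneg_right (h i) (hx i).le

theorem U_const (hd : 0 < d) (h0 : Good π₀) (f : Sta d → ENNReal) (hf : Measurable f) (hf1 : ∀ t, f t ≤ 1)
    (hinv : ∀ t, f (rauzyInduction d t) = f t) :
    ∃ C : ℝ, 0 ≤ C ∧ C ≤ 1 ∧ ∀ s, Val π₀ s → U f s = ENNReal.ofReal C := by
  have hfin : ∀ s, Val π₀ s → U f s ≠ ⊤ := fun s hs => ne_top_of_le_ne_top ENNReal.one_ne_top (U_le hf1 hs.2)
  obtain ⟨C, hC⟩ := liouville (π₀ := π₀) hd h0 (d + 1) (fun s => (U f s).toReal)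
    (fun s _ => ENNReal.toReal_nonneg)
    (fun s hs => by
      have := ENNReal.toReal_mono ENNReal.one_ne_top (U_le hf1 hs.2)
      simpa using this)
    (fun s hs => by
      have h1 := U_step hd (mem_good hd h0 hs.1) hs.2 f
      simp only [hinv] at h1
      have := congrArg ENNReal.toReal h1
      rw [ENNReal.toReal_add (ENNReal.mul_ne_top ENNReal.ofReal_ne_top (hfin _ (val_nx _ hs)))
        (ENNReal.mul_ne_top ENNReal.ofReal_ne_top (hfin _ (val_nx _ hs))), ENNReal.toReal_mul, ENNReal.toReal_mul,
        ENNReal.toReal_ofReal (pr_pos _ hs.2).le, ENNReal.toReal_ofReal (pr_pos _ hs.2).le] at this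
      exact this.symm)
    (fun s hs a ha => by simp only [U_scale f hf s ha])
    (fun π q1 q2 r h1 h2 h h' => by
      have := ENNReal.toReal_mono (ENNReal.mul_ne_top ENNReal.ofReal_ne_top (hfin _ h2))
        (U_cmp f π h1.2 h2.2 h h')
      have hr : 0 ≤ r := by
        have := h' 0
        by_contra hc
        push Not at hc
        nlinarith [h1.2 0, h2.2 0]
      rwa [ENNReal.toReal_mul, ENNReal.toReal_ofReal (by positivity)] at this)
  have hs0 : Val π₀ (π₀, fun _ => 1) := ⟨.base, fun _ => one_pos⟩
  refine ⟨C, ?_, ?_, fun s hs => ?_⟩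
  · rw [← hC _ hs0]; exact ENNReal.toReal_nonneg
  · rw [← hC _ hs0]
    have := ENNReal.toReal_mono ENNReal.one_ne_top (U_le hf1 hs0.2)
    simpa using this
  · rw [← hC s hs, ENNReal.ofReal_toReal (hfin s hs)]

end VM

namespace VM
variable {d : ℕ} {π₀ : Fin (d + 1) → Fin (d + 1)}

/-- coordinate exponentials -/
noncomputable def ge (i : Fin (d + 1)) : BoundedContinuousFunction (Fin (d + 1) → NNReal) ℝ :=
  BoundedContinuousFunction.ofNormedAddCommGroup (fun x => Real.exp (-(x i : ℝ))) (by fun_prop) 1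
    (fun x => by
      rw [Real.norm_eq_abs, Real.abs_exp, Real.exp_le_one_iff]
      have : (0 : ℝ) ≤ x i := NNReal.coe_nonneg _
      linarith)

theorem ge_apply (i : Fin (d + 1)) (x) : ge i x = Real.exp (-(x i : ℝ)) := rfl

theorem moment_unique {P P' : Measure (Fin (d + 1) → NNReal)} [IsFiniteMeasure P] [IsFiniteMeasure P']
    (h : ∀ n : Fin (d + 1) → ℕ, ∫ x, Real.exp (-∑ i, (n i : ℝ) * (x i : ℝ)) ∂P =
      ∫ x, Real.exp (-∑ i, (n i : ℝ) * (x i : ℝ)) ∂P') : P = P' := by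
  let A : StarSubalgebra ℝ (BoundedContinuousFunction (Fin (d + 1) → NNReal) ℝ) :=
    { (MvPolynomial.aeval (R := ℝ) (ge (d := d))).range with
      star_mem' := by
        intro a ha
        have : star a = a := by ext x; simp
        rw [this]; exact ha }
  refine ext_of_forall_mem_subalgebra_integral_eq_of_pseudoEMetric_complete_countable (A := A) ?_ ?_
  · intro x y hxy
    obtain ⟨i, hi⟩ := Function.ne_iff.1 hxy
    refine ⟨fun x => ge i x, ⟨BoundedContinuousFunction.toContinuousMapStarₐ ℝ (ge i), ⟨ge i, ?_, rfl⟩, rfl⟩, ?_⟩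
    · exact ⟨MvPolynomial.X i, by simp⟩
    · intro hc
      simp only [ge_apply] at hc
      have := Real.exp_injective hc
      apply hi
      exact NNReal.coe_injective (neg_injective this)
  · rintro g ⟨p, rfl⟩
    change ∫ x, (MvPolynomial.aeval (R := ℝ) (ge (d := d)) p) x ∂P = ∫ x, (MvPolynomial.aeval (R := ℝ) (ge (d := d)) p) x ∂P'
    induction p using MvPolynomial.induction_on' with
    | monomial u a =>
      have e : ∀ x, (MvPolynomial.aeval (R := ℝ) (ge (d := d)) (MvPolynomial.monomial u a)) x =
          a * Real.exp (-∑ i, (u i : ℝ) * (x i : ℝ)) := by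
        intro x
        rw [MvPolynomial.aeval_monomial, Finsupp.prod_fintype _ _ (by simp)]
        rw [← Finset.sum_neg_distrib, Real.exp_sum]
        simp only [BoundedContinuousFunction.coe_mul, Pi.mul_apply]
        congr 1
        rw [BoundedContinuousFunction.coe_prod, Finset.prod_apply]
        apply Finset.prod_congr rfl
        intro i _
        rw [BoundedContinuousFunction.coe_pow, Pi.pow_apply, ge_apply, ← Real.exp_nat_mul]
        congr 1; ring
      simp only [e, integral_const_mul, h]
    | add p q hp hq =>
      simp only [map_add, BoundedContinuousFunction.coe_add, Pi.add_apply]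
      rw [integral_add, integral_add, hp, hq]
      all_goals exact BoundedContinuousFunction.integrable _ _

theorem lap_unique {f g : (Fin (d + 1) → ℝ) → ENNReal} (hf : Measurable f) (hg : Measurable g)
    (hfin : ∫⁻ x in cone d, f x * ew (fun _ => 1) x ≠ ⊤)
    (h : ∀ q : Fin (d + 1) → ℝ, (∀ i, 0 < q i) →
      ∫⁻ x in cone d, f x * ew q x = ∫⁻ x in cone d, g x * ew q x) :
    f =ᵐ[volume.restrict (cone d)] g := by
  set e1 : (Fin (d + 1) → ℝ) → ENNReal := ew (fun _ => 1)
  have mf : Measurable (fun x => f x * e1 x) := hf.mul (meas_ew _)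
  have mg : Measurable (fun x => g x * e1 x) := hg.mul (meas_ew _)
  have hfin' : ∫⁻ x in cone d, g x * e1 x ≠ ⊤ := by
    rw [← h _ (fun _ => one_pos)]; exact hfin
  set φ : (Fin (d + 1) → ℝ) → (Fin (d + 1) → NNReal) := fun x i => (x i).toNNReal
  have mφ : Measurable φ := by
    rw [measurable_pi_iff]; intro i
    exact (measurable_pi_apply i).real_toNNReal
  set ψ : (Fin (d + 1) → NNReal) → (Fin (d + 1) → ℝ) := fun x i => (x i : ℝ)
  have mψ : Measurable ψ := by
    rw [measurable_pi_iff]; intro i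
    exact (measurable_pi_apply i).coe_nnreal_real
  set μ : (((Fin (d + 1) → ℝ) → ENNReal)) → Measure (Fin (d + 1) → ℝ) := fun f =>
    (volume.restrict (cone d)).withDensity (fun x => f x * e1 x) with hμ
  have key : ∀ f : (Fin (d + 1) → ℝ) → ENNReal, Measurable f → ∀ n : Fin (d + 1) → ℕ, 
      ∫ x, Real.exp (-∑ i, (n i : ℝ) * (x i : ℝ)) ∂(Measure.map φ (μ f)) =
      (∫⁻ x in cone d, f x * ew (fun i => 1 + n i) x).toReal := by
    intro f hf n
    have mf : Measurable (fun x => f x * e1 x) := hf.mul (meas_ew _)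
    have m0 : Measurable (fun x : Fin (d + 1) → NNReal => Real.exp (-∑ i, (n i : ℝ) * (x i : ℝ))) := by fun_prop
    have m1 : Measurable (fun a => ENNReal.ofReal (Real.exp (-∑ i, (n i : ℝ) * (φ a i : ℝ)))) :=
      m0.ennreal_ofReal.comp mφ
    rw [integral_eq_lintegral_of_nonneg_ae (Filter.Eventually.of_forall fun x => (Real.exp_pos _).le)
      m0.aestronglyMeasurable, lintegral_map m0.ennreal_ofReal mφ,
      show μ f = (volume.restrict (cone d)).withDensity (fun x => f x * e1 x) from rfl,
      lintegral_withDensity_eq_lintegral_mul _ mf m1]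
    congr 1
    refine setLIntegral_congr_fun meas_cone fun x hx => ?_
    simp only [Pi.mul_apply, mul_assoc]
    congr 1
    simp only [e1, ew]
    rw [← ENNReal.ofReal_mul (Real.exp_pos _).le, ← Real.exp_add]
    congr 2
    rw [← neg_add, ← Finset.sum_add_distrib]
    congr 1
    apply Finset.sum_congr rfl
    intro i _
    simp only [φ]
    rw [Real.coe_toNNReal _ (hx i).le]; ring
  have hback : ∀ f : (Fin (d + 1) → ℝ) → ENNReal, Measure.map ψ (Measure.map φ (μ f)) = μ f := by
    intro f
    rw [Measure.map_map mψ mφ]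
    conv_rhs => rw [← Measure.map_id (μ := μ f)]
    apply Measure.map_congr
    apply (withDensity_absolutelyContinuous _ _).ae_le
    filter_upwards [ae_restrict_mem meas_cone] with x hx
    funext i
    exact Real.coe_toNNReal _ (hx i).le
  have i1 : IsFiniteMeasure (μ f) := isFiniteMeasure_withDensity hfin
  have i2 : IsFiniteMeasure (μ g) := isFiniteMeasure_withDensity hfin'
  have i3 : IsFiniteMeasure (Measure.map φ (μ f)) := Measure.isFiniteMeasure_map _ _
  have i4 : IsFiniteMeasure (Measure.map φ (μ g)) := Measure.isFiniteMeasure_map _ _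
  have he : Measure.map φ (μ f) = Measure.map φ (μ g) := by
    apply moment_unique
    intro n
    rw [key f hf, key g hg, h _ (fun i => by positivity)]
  have he2 : μ f = μ g := by rw [← hback f, ← hback g, he]
  have he3 := (withDensity_eq_iff mf.aemeasurable mg.aemeasurable hfin).1 he2
  filter_upwards [he3] with x hx
  have p0 : e1 x ≠ 0 := by
    simp only [e1, ew, ne_eq, ENNReal.ofReal_eq_zero, not_le]; exact Real.exp_pos _
  exact (ENNReal.mul_left_inj p0 ENNReal.ofReal_ne_top).1 hx

/-- the ergodicity statement -/
theorem erg (hd : 0 < d) (h0 : Good π₀) {E : Set (Sta d)} (hE : MeasurableSet E)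
    (hinv : rauzyInduction d ⁻¹' E = E) :
    rauzyRefMeasure d π₀ E = 0 ∨ rauzyRefMeasure d π₀ Eᶜ = 0 := by
  set f : Sta d → ENNReal := E.indicator 1 with hfd
  have hf : Measurable f := measurable_one.indicator hE
  have hf1 : ∀ t, f t ≤ 1 := fun t => Set.indicator_le_self' (fun _ _ => zero_le) t
  have hinv' : ∀ t, f (rauzyInduction d t) = f t := by
    intro t
    have : rauzyInduction d t ∈ E ↔ t ∈ E := by
      change t ∈ rauzyInduction d ⁻¹' E ↔ _
      rw [hinv]
    by_cases ht : t ∈ E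
    · rw [hfd, Set.indicator_of_mem ht, Set.indicator_of_mem (this.2 ht)]; rfl
    · rw [hfd, Set.indicator_of_notMem ht, Set.indicator_of_notMem (fun h => ht (this.1 h))]
  obtain ⟨C, hC0, hC1, hC⟩ := U_const hd h0 f hf hf1 hinv'
  have hae : ∀ π, MemRauzyClass d π₀ π → (fun x => f (π, nrm x)) =ᵐ[volume.restrict (cone d)] 
      fun _ => ENNReal.ofReal C := by
    intro π hπ
    have hm : Measurable (fun x => f (π, nrm x)) := hf.comp (measurable_const.prodMk meas_nrm)
    have key : ∀ q : Fin (d + 1) → ℝ, (∀ i, 0 < q i) → ∫⁻ x in cone d, f (π, nrm x) * ew q x =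
        ∫⁻ x in cone d, ENNReal.ofReal C * ew q x := by
      intro q hq
      have h1 := hC (π, q) ⟨hπ, hq⟩
      have p : 0 < ∏ i, q i := Finset.prod_pos fun i _ => hq i
      have h2 := U_one (s := (π, q)) hq
      unfold U at h1 h2
      simp only [one_mul] at h2
      rw [lintegral_const_mul _ (meas_ew _)]
      refine (ENNReal.mul_right_inj (a := ENNReal.ofReal (∏ i, q i)) (by simpa using p)
        ENNReal.ofReal_ne_top).1 ?_
      rw [h1, mul_left_comm, h2, mul_one]
    refine lap_unique hm measurable_const ?_ key
    rw [key _ (fun _ => one_pos), lintegral_const_mul _ (meas_ew _)]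
    refine ENNReal.mul_ne_top ENNReal.ofReal_ne_top ?_
    have := lap (d := d) (q := fun _ => 1) (fun _ => one_pos)
    unfold ew
    rw [this]
    exact ENNReal.ofReal_ne_top
  have hnull : ∀ A : Set (Sta d), MeasurableSet A → (∀ π, MemRauzyClass d π₀ π → 
      (fun x => A.indicator (1 : Sta d → ENNReal) (π, nrm x)) =ᵐ[volume.restrict (cone d)] fun _ => 0) → 
      rauzyRefMeasure d π₀ A = 0 := by
    intro A hA h
    rw [← lintegral_indicator_one hA, ref_lint (measurable_one.indicator hA)]
    apply Finset.sum_eq_zero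
    intro π hπ
    have hm : Measurable (fun w => A.indicator (1 : Sta d → ENNReal) (π, w)) :=
      (measurable_one.indicator hA).comp (measurable_const.prodMk measurable_id)
    have := exp_polar hm
    have h2 : ∫⁻ x in cone d, A.indicator (1 : Sta d → ENNReal) (π, nrm x) * ENNReal.ofReal (Real.exp (-∑ i, x i)) = 0 := by
      rw [← lintegral_zero (μ := volume.restrict (cone d))]
      apply lintegral_congr_ae
      filter_upwards [h π (mem_Rc.1 hπ)] with x hx
      rw [hx, zero_mul]
    rw [h2] at this
    have h3 := this.symm
    rw [mul_eq_zero] at h3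
    refine h3.resolve_left ?_
    rw [ENNReal.ofReal_eq_zero, not_le]; positivity
  by_cases hC' : C = 0
  · left
    refine hnull E hE fun π hπ => ?_
    filter_upwards [hae π hπ] with x hx
    rw [← hfd, hx, hC']; simp
  · right
    refine hnull _ hE.compl fun π hπ => ?_
    filter_upwards [hae π hπ] with x hx
    apply Set.indicator_of_notMem
    intro hc
    rw [hfd, Set.indicator_of_notMem hc] at hx
    have := hx.symm
    rw [ENNReal.ofReal_eq_zero] at this
    exact hC' (le_antisymm this hC0)

end VM

namespace VM
variable {d : ℕ} {π₀ : Fin (d + 1) → Fin (d + 1)}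

theorem U_ones {f : Sta d → ENNReal} (hf : Measurable f) (π : Fin (d + 1) → Fin (d + 1)) :
    U f (π, fun _ => 1) = ENNReal.ofReal d.factorial * ∫⁻ w, f (π, w) ∂(sig d) := by
  have hm : Measurable (fun w => f (π, w)) := hf.comp (measurable_const.prodMk measurable_id)
  rw [← exp_polar hm]
  simp [U, ew]

/-- indicator function of a set of states -/
noncomputable def ind (A : Set (Sta d)) : Sta d → ENNReal := A.indicator 1

theorem meas_ind {A : Set (Sta d)} (hA : MeasurableSet A) : Measurable (ind A) :=
  measurable_one.indicator hA

theorem ind_le_one (A : Set (Sta d)) (t) : ind A t ≤ 1 :=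
  Set.indicator_le_self' (f := (1 : Sta d → ENNReal)) (fun _ _ => zero_le) t

theorem ind_mono {A B : Set (Sta d)} (h : A ⊆ B) (t) : ind A t ≤ ind B t :=
  Set.indicator_le_indicator_of_subset h (fun _ => zero_le) t

theorem ref_null {A : Set (Sta d)} (hA : MeasurableSet A) :
    rauzyRefMeasure d π₀ A = 0 ↔ ∀ π, MemRauzyClass d π₀ π → U (ind A) (π, fun _ => 1) = 0 := by
  have hf : ENNReal.ofReal (d.factorial : ℝ) ≠ 0 := by
    rw [ne_eq, ENNReal.ofReal_eq_zero, not_le]; positivity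
  rw [← lintegral_indicator_one hA, ref_lint (measurable_one.indicator hA), Finset.sum_eq_zero_iff]
  refine forall_congr' fun π => ?_
  rw [mem_Rc, U_ones (meas_ind hA), mul_eq_zero, or_iff_right hf]
  rfl

/-- points visiting `W` at some time at least `k` -/
def AA (W : Set (Sta d)) (k : ℕ) : Set (Sta d) := {x | ∃ n, k ≤ n ∧ (rauzyInduction d)^[n] x ∈ W}

theorem meas_AA {W : Set (Sta d)} (hW : MeasurableSet W) (k : ℕ) : MeasurableSet (AA W k) := by
  have : AA W k = ⋃ n, ⋃ (_ : k ≤ n), (rauzyInduction d)^[n] ⁻¹' W := by ext; simp [AA]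
  rw [this]
  exact .iUnion fun n => .iUnion fun _ => (meas_P.iterate n) hW

theorem AA_anti (W : Set (Sta d)) : Antitone (AA W) := fun _ _ h _ ⟨n, hn, hx⟩ => ⟨n, h.trans hn, hx⟩

theorem AA_succ (W : Set (Sta d)) (k : ℕ) (x : Sta d) : rauzyInduction d x ∈ AA W k ↔ x ∈ AA W (k + 1) := by
  constructor
  · rintro ⟨n, hn, h⟩
    exact ⟨n + 1, by omega, by rwa [Function.iterate_succ_apply]⟩
  · rintro ⟨n, hn, h⟩
    obtain ⟨n, rfl⟩ : ∃ j, n = j + 1 := ⟨n - 1, by omega⟩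
    exact ⟨n, by omega, by rwa [Function.iterate_succ_apply] at h⟩

theorem U_fin {A : Set (Sta d)} {s : Sta d} (hs : ∀ i, 0 < s.2 i) : U (ind A) s ≠ ⊤ :=
  ne_top_of_le_ne_top ENNReal.one_ne_top (U_le (ind_le_one A) hs)

theorem U_AA (hd : 0 < d) (h0 : Good π₀) {W : Set (Sta d)} (k : ℕ) {s : Sta d} (hs : Val π₀ s) :
    (U (ind (AA W (k + 1))) s).toReal = pr true s * (U (ind (AA W k)) (nx true s)).toReal +
      pr false s * (U (ind (AA W k)) (nx false s)).toReal := by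
  have h1 := U_step hd (mem_good hd h0 hs.1) hs.2 (ind (AA W k))
  have e : (fun t => ind (AA W k) (rauzyInduction d t)) = ind (AA W (k + 1)) := by
    funext t
    by_cases ht : t ∈ AA W (k + 1)
    · rw [ind, ind, Set.indicator_of_mem ht, Set.indicator_of_mem ((AA_succ W k t).2 ht)]; rfl
    · rw [ind, ind, Set.indicator_of_notMem ht, Set.indicator_of_notMem (fun h => ht ((AA_succ W k t).1 h))]
  rw [e] at h1
  rw [h1, ENNReal.toReal_add (ENNReal.mul_ne_top ENNReal.ofReal_ne_top (U_fin (val_nx _ hs).2))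
        (ENNReal.mul_ne_top ENNReal.ofReal_ne_top (U_fin (val_nx _ hs).2)), ENNReal.toReal_mul, ENNReal.toReal_mul,
        ENNReal.toReal_ofReal (pr_pos _ hs.2).le, ENNReal.toReal_ofReal (pr_pos _ hs.2).le]

theorem U_AA_lower (hd : 0 < d) (h0 : Good π₀) {W : Set (Sta d)} (hW : MeasurableSet W)
    (hpos : rauzyRefMeasure d π₀ W ≠ 0) :
    ∃ κ : ℝ, 0 < κ ∧ ∀ k s, Val π₀ s → κ ≤ (U (ind (AA W k)) s).toReal := by
  rw [ne_eq, ref_null hW] at hpos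
  push Not at hpos
  obtain ⟨π', hπ', hU⟩ := hpos
  obtain ⟨R, hR, hH⟩ := bal_hit hd h0 hπ'
  have hR0 : 0 < R := by linarith
  set e0 := (U (ind W) (π', fun _ => 1)).toReal with he0
  have he0p : 0 < e0 := ENNReal.toReal_pos hU (U_fin fun _ => one_pos)
  have hcmpr : ∀ t : Sta d, Val π₀ t → t.1 = π' → Bal R t.2 → e0 / (R ^ 2) ^ (d + 1) ≤ (U (ind W) t).toReal := by
    rintro ⟨π, q⟩ ht rfl hb
    have hq0 : 0 < q 0 := ht.2 0
    have h1 := U_cmp (ind W) π (q1 := fun _ => R * 1) (q2 := fun i => (q 0)⁻¹ * q i) (r := R ^ 2)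
      (fun _ => by linarith) (fun i => mul_pos (inv_pos.2 hq0) (ht.2 i))
      (fun i => by
        have := hb i 0
        simp only at this
        rw [inv_mul_le_iff₀ hq0]; linarith)
      (fun i => by
        have := hb 0 i
        simp only at this
        have e : R ^ 2 * ((q 0)⁻¹ * q i) = R * (R * q i / q 0) := by field_simp
        rw [e]
        apply mul_le_mul_of_nonneg_left _ hR0.le
        rw [le_div_iff₀ hq0]; linarith)
    rw [U_scale _ (meas_ind hW) (π, q) (inv_pos.2 hq0), U_scale _ (meas_ind hW) (π, fun _ => 1) hR0] at h1
    have h2 := ENNReal.toReal_mono (ENNReal.mul_ne_top ENNReal.ofReal_ne_top (U_fin ht.2)) h1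
    rw [ENNReal.toReal_mul, ENNReal.toReal_ofReal (by positivity)] at h2
    rw [div_le_iff₀ (by positivity), mul_comm]
    exact h2
  have hW0 : W ⊆ AA W 0 := fun x hx => ⟨0, le_rfl, hx⟩
  have hmonoR : ∀ {A B : Set (Sta d)} (_ : A ⊆ B) {s : Sta d} (_ : Val π₀ s),
      (U (ind A) s).toReal ≤ (U (ind B) s).toReal := fun h s hs =>
    ENNReal.toReal_mono (U_fin hs.2) (U_mono fun x _ => ind_mono h _)
  have base : ∀ s, Val π₀ s → 1 / R * (e0 / (R ^ 2) ^ (d + 1)) ≤ (U (ind (AA W 0)) s).toReal := by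
    intro s hs
    refine hH s hs (fun s => (U (ind (AA W 0)) s).toReal) ⟨fun _ _ => ENNReal.toReal_nonneg, fun t ht => ?_⟩ _
      (by positivity) fun t ht hv => ?_
    · rw [← U_AA hd h0 0 ht]
      exact hmonoR (AA_anti W (Nat.zero_le 1)) ht
    · exact (hcmpr t hv ht.1 ht.2).trans (hmonoR hW0 hv)
  refine ⟨1 / R * (e0 / (R ^ 2) ^ (d + 1)), by positivity, fun k => ?_⟩
  induction k with
  | zero => exact base
  | succ k ih =>
    intro s hs
    rw [U_AA hd h0 k hs]
    have h1 := ih _ (val_nx true hs)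
    have h2 := ih _ (val_nx false hs)
    have h3 := pr_add hs.2
    have h4 := pr_pos true hs.2
    have h5 := pr_pos false hs.2
    have h6 := mul_le_mul_of_nonneg_left h1 h4.le
    have h7 := mul_le_mul_of_nonneg_left h2 h5.le
    have h8 : (pr true s + pr false s) * (1 / R * (e0 / (R ^ 2) ^ (d + 1))) = 1 / R * (e0 / (R ^ 2) ^ (d + 1)) := by
      rw [h3, one_mul]
    linarith

theorem recur (hd : 0 < d) (h0 : Good π₀) {W : Set (Sta d)} (hW : MeasurableSet W)
    (hpos : rauzyRefMeasure d π₀ W ≠ 0) : ∃ x ∈ W, ∃ n ≠ 0, (rauzyInduction d)^[n] x ∈ W := by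
  obtain ⟨κ, hκ, hk⟩ := U_AA_lower hd h0 hW hpos
  set E : Set (Sta d) := ⋂ k, AA W k with hE
  have mE : MeasurableSet E := .iInter fun k => meas_AA hW k
  have hinv : rauzyInduction d ⁻¹' E = E := by
    ext x
    simp only [hE, Set.mem_preimage, Set.mem_iInter, AA_succ]
    exact ⟨fun h k => AA_anti W (Nat.le_succ k) (h k), fun h k => h (k + 1)⟩
  have hs0 : Val π₀ (π₀, fun _ => 1) := ⟨.base, fun _ => one_pos⟩
  set ν : Measure (Sta d) := Measure.map (fun w => (π₀, w)) (sig d) with hν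
  have hνU : ∀ A : Set (Sta d), MeasurableSet A → U (ind A) (π₀, fun _ => 1) = ENNReal.ofReal d.factorial * ν A := by
    intro A hA
    have m1 : Measurable (fun w : Fin (d + 1) → ℝ => (π₀, w)) := measurable_const.prodMk measurable_id
    rw [U_ones (meas_ind hA), ← lintegral_indicator_one hA, hν,
      lintegral_map (measurable_one.indicator hA) m1]
    rfl
  have hf : ENNReal.ofReal (d.factorial : ℝ) ≠ 0 := by
    rw [ne_eq, ENNReal.ofReal_eq_zero, not_le]; positivity
  have hfin : ∀ A : Set (Sta d), MeasurableSet A → ν A ≠ ⊤ := by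
    intro A hA hc
    have := hνU A hA
    rw [hc, ENNReal.mul_top hf] at this
    exact U_fin (fun _ => one_pos) this
  have hlim := tendsto_measure_iInter_atTop (μ := ν) (s := AA W)
    (fun k => (meas_AA hW k).nullMeasurableSet) (AA_anti W) ⟨0, hfin _ (meas_AA hW 0)⟩
  rcases erg hd h0 mE hinv with h | h
  · exfalso
    have h1 := (ref_null mE).1 h π₀ .base
    rw [hνU _ mE, mul_eq_zero, or_iff_right hf] at h1
    rw [← hE, h1] at hlim
    have hl2 := ENNReal.Tendsto.const_mul (a := ENNReal.ofReal (d.factorial : ℝ)) hlim (Or.inr ENNReal.ofReal_ne_top)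
    rw [mul_zero] at hl2
    have : ENNReal.ofReal κ ≤ 0 := by
      refine ge_of_tendsto' hl2 fun k => ?_
      simp only [Function.comp]
      rw [← hνU _ (meas_AA hW k)]
      exact ENNReal.ofReal_le_of_le_toReal (hk k _ hs0)
    rw [nonpos_iff_eq_zero, ENNReal.ofReal_eq_zero] at this
    linarith
  · by_contra hcon
    push Not at hcon
    apply hpos
    refine measure_mono_null (fun x hx => ?_) h
    intro hxE
    obtain ⟨n, hn, hxn⟩ := Set.mem_iInter.1 hxE 1
    exact hcon x hx n (by omega) hxn

end VM

namespace VM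
variable {d : ℕ} {π₀ : Fin (d + 1) → Fin (d + 1)}

/-- move the last letter of `b` right after `a` -/
def insA (b : Fin (d + 1) → Fin (d + 1)) (a : Fin (d + 1)) : Fin (d + 1) → Fin (d + 1) := fun j =>
  if b j ≤ b a then b j else if b j = Fin.last d then b a + 1 else b j + 1

/-- partial sums -/
noncomputable def ps (t : Fin (d + 1) → Fin (d + 1)) (z : Fin (d + 1) → ℝ) (i : Fin (d + 1)) : ℝ :=
  ∑ j, (if t j < t i then (1 : ℝ) else 0) * z j

/-- suspension data -/
def TT (t b : Fin (d + 1) → Fin (d + 1)) : Set (Fin (d + 1) → ℝ) :=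
  {z | (∀ i, t i ≠ 0 → 0 < ps t z i) ∧ ∀ i, b i ≠ 0 → ps b z i < 0}

/-- heights -/
noncomputable def hh (t b : Fin (d + 1) → Fin (d + 1)) (z : Fin (d + 1) → ℝ) : Fin (d + 1) → ℝ :=
  fun i => ps t z i - ps b z i

theorem insA_val {b : Fin (d + 1) → Fin (d + 1)} {a β : Fin (d + 1)} (hb : Function.Injective b)
    (hβ : b β = Fin.last d) (hab : a ≠ β) (j : Fin (d + 1)) :
    (j = β ∧ (insA b a j : ℕ) = b a + 1 ∧ (b j : ℕ) = d) ∨ (j ≠ β ∧ (b j : ℕ) < d ∧ ((b j ≤ b a ∧ (insA b a j : ℕ) = b j) ∨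
      (b a < b j ∧ (insA b a j : ℕ) = b j + 1))) := by
  have ha : b a ≠ Fin.last d := fun h => hab (hb (h.trans hβ.symm))
  have ha' : (b a : ℕ) < d := Fin.val_lt_last ha
  by_cases hj : j = β
  · left
    refine ⟨hj, ?_, by rw [hj, hβ]; rfl⟩
    unfold insA
    rw [if_neg, if_pos (by rw [hj, hβ]), add_one_val ha]
    rw [hj, hβ, not_le]; exact Fin.lt_last_iff_ne_last.2 ha
  · right
    have hj' : b j ≠ Fin.last d := fun h => hj (hb (h.trans hβ.symm))
    refine ⟨hj, Fin.val_lt_last hj', ?_⟩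
    by_cases h : b j ≤ b a
    · left; exact ⟨h, by unfold insA; rw [if_pos h]⟩
    · right; exact ⟨not_le.1 h, by unfold insA; rw [if_neg h, if_neg hj', add_one_val hj']⟩

theorem ps_last {t : Fin (d + 1) → Fin (d + 1)} (ht : Function.Injective t) {a : Fin (d + 1)}
    (ha : t a = Fin.last d) (z : Fin (d + 1) → ℝ) : ps t z a = ∑ j, z j - z a := by
  unfold ps
  rw [eq_sub_iff_add_eq, ← Finset.sum_erase_add _ _ (Finset.mem_univ a),
    ← Finset.sum_erase_add (f := z) Finset.univ (Finset.mem_univ a)]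
  rw [if_neg (lt_irrefl _), zero_mul, add_zero]
  congr 1
  apply Finset.sum_congr rfl
  intro j hj
  rw [if_pos, one_mul]
  rw [ha]
  refine Fin.lt_last_iff_ne_last.2 fun h => (Finset.ne_of_mem_erase hj) (ht (h.trans ha.symm))

theorem ps_tv (t : Fin (d + 1) → Fin (d + 1)) (w l : Fin (d + 1)) (z : Fin (d + 1) → ℝ) (i : Fin (d + 1)) :
    ps t (tv w l z) i = ps t z i + (if t w < t i then (1 : ℝ) else 0) * z l := sum_tv w l _ z

section LL
variable {t b : Fin (d + 1) → Fin (d + 1)} {a β : Fin (d + 1)} (ht : Function.Injective t)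
    (hb : Function.Injective b) (ha : t a = Fin.last d) (hβ : b β = Fin.last d) (hab : a ≠ β)
    (z : Fin (d + 1) → ℝ)

theorem ps_top (ha : t a = Fin.last d) (z : Fin (d + 1) → ℝ) (i) : ps t (tv a β z) i = ps t z i := by
  rw [ps_tv, if_neg, zero_mul, add_zero]
  rw [ha]; exact not_lt.2 (Fin.le_last _)

theorem ps_bot (hb : Function.Injective b) (hβ : b β = Fin.last d) (hab : a ≠ β)
    (z : Fin (d + 1) → ℝ) {i} (hi : i ≠ β) :
    ps (insA b a) z i = ps b (tv a β z) i := by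
  have e : ∀ j, (if insA b a j < insA b a i then (1 : ℝ) else 0) * z j =
      (if b j < b i then (1 : ℝ) else 0) * z j + (if j = β then (if b a < b i then (1 : ℝ) else 0) * z β else 0) := by
    intro j
    have hj := insA_val hb hβ hab j
    have hi' := insA_val hb hβ hab i
    simp only [Fin.lt_def, Fin.le_def] at *
    by_cases hjb : j = β
    · have h1 : ¬ ((b j : ℕ) < b i) := by omega
      have h2 : ((insA b a j : ℕ) < insA b a i) ↔ ((b a : ℕ) < b i) := by omega
      rw [if_neg h1, if_pos hjb]
      simp only [h2]; rw [hjb]; ring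
    · have h2 : ((insA b a j : ℕ) < insA b a i) ↔ ((b j : ℕ) < b i) := by omega
      simp only [h2, hjb, if_false]; ring
  rw [ps_tv, ps, Finset.sum_congr rfl fun j _ => e j, Finset.sum_add_distrib, Finset.sum_ite_eq' Finset.univ β]
  simp [ps]

theorem ps_bot_self (hb : Function.Injective b) (hβ : b β = Fin.last d) (hab : a ≠ β)
    (z : Fin (d + 1) → ℝ) : ps (insA b a) z β = ps b (tv a β z) a + z a := by
  have e : ∀ j, (if insA b a j < insA b a β then (1 : ℝ) else 0) * z j =
      (if b j < b a then (1 : ℝ) else 0) * z j + (if j = a then z a else 0) := by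
    intro j
    have hj := insA_val hb hβ hab j
    have hi' := insA_val hb hβ hab β
    have hinj : (b j : ℕ) = b a → j = a := fun h => hb (Fin.ext h)
    simp only [Fin.lt_def, Fin.le_def] at *
    by_cases hja : j = a
    · subst hja
      have h1 : ((insA b j j : ℕ) < insA b j β) := by omega
      rw [if_pos h1]; simp
    · have h3 : (b j : ℕ) ≠ b a := fun h => hja (hinj h)
      have h2 : ((insA b a j : ℕ) < insA b a β) ↔ ((b j : ℕ) < b a) := by omega
      simp only [h2, hja, if_false, add_zero]
  rw [ps_tv, ps, Finset.sum_congr rfl fun j _ => e j, Finset.sum_add_distrib, Finset.sum_ite_eq' Finset.univ a]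
  simp [ps]

theorem ps_beta (hb : Function.Injective b) (hβ : b β = Fin.last d) (hab : a ≠ β)
    (z : Fin (d + 1) → ℝ) : ps b (tv a β z) β = ∑ j, z j := by
  rw [ps_tv, ps_last hb hβ, if_pos]
  · ring
  · rw [hβ]; exact Fin.lt_last_iff_ne_last.2 fun h => hab (hb (h.trans hβ.symm))

theorem TT_step (hd : 0 < d) (ht : Function.Injective t) (hb : Function.Injective b) (ha : t a = Fin.last d)
    (hβ : b β = Fin.last d) (hab : a ≠ β) (z : Fin (d + 1) → ℝ) :
    tv a β z ∈ TT t b ↔ z ∈ TT t (insA b a) ∧ ∑ j, z j < 0 := by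
  have hl0 : Fin.last d ≠ 0 := by
    intro h; have := congrArg Fin.val h; simp at this; omega
  have h0 : ∀ i, i ≠ β → (insA b a i = 0 ↔ b i = 0) := by
    intro i hi
    have := insA_val hb hβ hab i
    simp only [Fin.ext_iff, Fin.lt_def, Fin.le_def, Fin.val_zero] at *
    omega
  simp only [TT, Set.mem_ofPred_eq]
  simp only [ps_top ha]
  constructor
  · rintro ⟨h1, h2⟩
    have hs : ∑ j, z j < 0 := by rw [← ps_beta hb hβ hab]; exact h2 β (by rw [hβ]; exact hl0)
    refine ⟨⟨h1, fun i hi => ?_⟩, hs⟩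
    by_cases hiβ : i = β
    · rw [hiβ, ps_bot_self hb hβ hab]
      have h3 := h1 a (by rw [ha]; exact hl0)
      rw [ps_last ht ha] at h3
      have h4 : ps b (tv a β z) a ≤ 0 := by
        by_cases hba : b a = 0
        · apply le_of_eq
          apply Finset.sum_eq_zero
          intro j _
          rw [if_neg, zero_mul]
          rw [hba]; exact not_lt.2 (Fin.zero_le _)
        · exact (h2 a hba).le
      linarith
    · rw [ps_bot hb hβ hab z hiβ]
      exact h2 i (fun h => hi ((h0 i hiβ).2 h))
  · rintro ⟨⟨h1, h2⟩, hs⟩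
    refine ⟨h1, fun i hi => ?_⟩
    by_cases hiβ : i = β
    · rw [hiβ, ps_beta hb hβ hab]; exact hs
    · rw [← ps_bot hb hβ hab z hiβ]
      exact h2 i (fun h => hi ((h0 i hiβ).1 h))

theorem hh_step (ht : Function.Injective t) (hb : Function.Injective b) (ha : t a = Fin.last d)
    (hβ : b β = Fin.last d) (hab : a ≠ β) (z y : Fin (d + 1) → ℝ) :
    ∑ i, hh t b (tv a β z) i * tv a β y i = ∑ i, hh t (insA b a) z i * y i := by
  rw [sum_tv]
  have e : ∀ i, hh t (insA b a) z i = hh t b (tv a β z) i + (if i = β then hh t b (tv a β z) a else 0) := by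
    intro i
    unfold hh
    rw [ps_top ha]
    by_cases hi : i = β
    · rw [if_pos hi, hi, ps_bot_self hb hβ hab, ps_beta hb hβ hab, ps_top ha, ps_last ht ha]; ring
    · rw [if_neg hi, ps_bot hb hβ hab z hi]; ring
  simp only [e, add_mul, Finset.sum_add_distrib, ite_mul, zero_mul]
  rw [Finset.sum_ite_eq' Finset.univ β]
  simp
end LL

/-- density (with a restriction on the total sum) -/
noncomputable def RR (S : Set ℝ) (t b : Fin (d + 1) → Fin (d + 1)) (x : Fin (d + 1) → ℝ) : ENNReal :=
  ∫⁻ z in TT t b ∩ {z | ∑ j, z j ∈ S}, ew (hh t b z) x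

theorem cont_ps (t : Fin (d + 1) → Fin (d + 1)) (i) : Continuous (fun z => ps t z i) := by
  unfold ps; fun_prop

theorem open_TT (t b : Fin (d + 1) → Fin (d + 1)) : IsOpen (TT t b) := by
  have : TT t b = (⋂ i, ⋂ (_ : t i ≠ 0), {z | 0 < ps t z i}) ∩ ⋂ i, ⋂ (_ : b i ≠ 0), {z | ps b z i < 0} := by
    ext z; simp [TT]
  rw [this]
  refine IsOpen.inter ?_ ?_
  · exact isOpen_iInter_of_finite fun i => isOpen_iInter_of_finite fun _ => isOpen_lt continuous_const (cont_ps t i)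
  · exact isOpen_iInter_of_finite fun i => isOpen_iInter_of_finite fun _ => isOpen_lt (cont_ps b i) continuous_const

theorem meas_sumS {S : Set ℝ} (hS : MeasurableSet S) : MeasurableSet {z : Fin (d + 1) → ℝ | ∑ j, z j ∈ S} :=
  (by fun_prop : Measurable fun z : Fin (d + 1) → ℝ => ∑ j, z j) hS

theorem RR_step (hd : 0 < d) {t b : Fin (d + 1) → Fin (d + 1)} {a β : Fin (d + 1)}
    (ht : Function.Injective t) (hb : Function.Injective b) (ha : t a = Fin.last d)
    (hβ : b β = Fin.last d) (hab : a ≠ β) (y : Fin (d + 1) → ℝ) :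
    RR Set.univ t b (tv a β y) = RR (Set.Iio 0) t (insA b a) y := by
  have hemb : MeasurableEmbedding (tv a β) := (cont_tv a β).measurableEmbedding (inj_tv hab)
  unfold RR
  rw [← (mp_tv hab).setLIntegral_comp_preimage_emb hemb]
  have e1 : tv a β ⁻¹' (TT t b ∩ {z | ∑ j, z j ∈ Set.univ}) = TT t (insA b a) ∩ {z | ∑ j, z j ∈ Set.Iio 0} := by
    ext z
    simp only [Set.mem_univ, Set.mem_preimage, Set.mem_inter_iff, Set.mem_ofPred_eq, and_true, Set.mem_Iio]
    exact TT_step hd ht hb ha hβ hab z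
  rw [e1]
  congr 1
  funext z
  unfold ew
  rw [hh_step ht hb ha hβ hab]

theorem ps_neg (t : Fin (d + 1) → Fin (d + 1)) (z : Fin (d + 1) → ℝ) (i) : ps t (-z) i = -ps t z i := by
  simp [ps]

theorem RR_swap (S : Set ℝ) (t b : Fin (d + 1) → Fin (d + 1)) (x : Fin (d + 1) → ℝ) :
    RR S t b x = RR (Neg.neg ⁻¹' S) b t x := by
  unfold RR
  have mp : MeasurePreserving (Neg.neg : (Fin (d + 1) → ℝ) → _) volume volume := Measure.measurePreserving_neg _
  rw [← mp.setLIntegral_comp_preimage_emb (MeasurableEquiv.neg _).measurableEmbedding]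
  have e1 : Neg.neg ⁻¹' (TT t b ∩ {z : Fin (d + 1) → ℝ | ∑ j, z j ∈ S}) = TT b t ∩ {z | ∑ j, z j ∈ Neg.neg ⁻¹' S} := by
    ext z
    simp only [Set.mem_preimage, Set.mem_inter_iff, Set.mem_ofPred_eq, TT, ps_neg, Pi.neg_apply,
      Finset.sum_neg_distrib, Left.neg_pos_iff, Left.neg_neg_iff]
    tauto
  rw [e1]
  congr 1
  funext z
  have : hh t b (-z) = hh b t z := by
    funext i; simp only [hh, ps_neg]; ring
  rw [this]

theorem RR_perm (S : Set ℝ) (t b : Fin (d + 1) → Fin (d + 1)) (σ : Equiv.Perm (Fin (d + 1)))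
    (x : Fin (d + 1) → ℝ) : RR S (t ∘ σ) (b ∘ σ) (x ∘ σ) = RR S t b x := by
  have hps : ∀ (t : Fin (d + 1) → Fin (d + 1)) z i, ps (t ∘ σ) (z ∘ σ) i = ps t z (σ i) := fun t z i =>
    Equiv.sum_comp σ (fun j => (if t j < t (σ i) then (1 : ℝ) else 0) * z j)
  unfold RR
  have hemb : MeasurableEmbedding (fun y : Fin (d + 1) → ℝ => y ∘ σ) := by
    refine Continuous.measurableEmbedding (by fun_prop) fun y y' h => ?_
    funext i
    have := congrFun h (σ.symm i)
    simpa using this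
  rw [← (mp_perm σ).setLIntegral_comp_preimage_emb hemb]
  have e1 : (fun y : Fin (d + 1) → ℝ => y ∘ σ) ⁻¹' (TT (t ∘ σ) (b ∘ σ) ∩ {z | ∑ j, z j ∈ S}) =
      TT t b ∩ {z | ∑ j, z j ∈ S} := by
    ext z
    have hs : ∑ j, (z ∘ σ) j = ∑ j, z j := Equiv.sum_comp σ z
    simp only [Set.mem_preimage, Set.mem_inter_iff, Set.mem_ofPred_eq, TT, hps, hs]
    rw [← σ.forall_congr_right (q := fun i => t i ≠ 0 → 0 < ps t z i),
      ← σ.forall_congr_right (q := fun i => b i ≠ 0 → ps b z i < 0)]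
    rfl
  rw [e1]
  congr 1
  funext z
  unfold ew
  congr 3
  have : ∀ i, hh (t ∘ σ) (b ∘ σ) (z ∘ σ) i = hh t b z (σ i) := fun i => by simp only [hh, hps]
  simp only [this]
  exact Equiv.sum_comp σ (fun i => hh t b z i * x i)

end VM

namespace VM
variable {d : ℕ} {π₀ : Fin (d + 1) → Fin (d + 1)}

theorem null_sum : volume {x : Fin (d + 1) → ℝ | ∑ j, x j = 0} = 0 := by
  let φ : (Fin (d + 1) → ℝ) →ₗ[ℝ] ℝ := ∑ j, LinearMap.proj (R := ℝ) (φ := fun _ => ℝ) j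
  have : {x : Fin (d + 1) → ℝ | ∑ j, x j = 0} = (LinearMap.ker φ : Set _) := by
    ext x; simp [φ]
  rw [this]
  apply Measure.addHaar_submodule
  intro htop
  have : (Pi.single 0 (1 : ℝ)) ∈ LinearMap.ker φ := by rw [htop]; trivial
  simp [φ, Pi.single_apply] at this

theorem RR_split (t b : Fin (d + 1) → Fin (d + 1)) (x : Fin (d + 1) → ℝ) :
    RR Set.univ t b x = RR (Set.Iio 0) t b x + RR (Set.Ioi 0) t b x := by
  unfold RR
  have e : (TT t b \ {z | ∑ j, z j ∈ Set.Iio 0} : Set (Fin (d + 1) → ℝ)) =ᵐ[volume]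
      (TT t b ∩ {z | ∑ j, z j ∈ Set.Ioi 0} : Set (Fin (d + 1) → ℝ)) := by
    have h0 : ∀ᵐ z : Fin (d + 1) → ℝ, ∑ j, z j ≠ 0 := by
      rw [ae_iff]; simpa using null_sum
    filter_upwards [h0] with z hz
    apply propext
    change (z ∈ TT t b ∧ ¬ (∑ j, z j < 0)) ↔ (z ∈ TT t b ∧ 0 < ∑ j, z j)
    refine and_congr_right fun _ => ?_
    rw [not_lt]
    exact ⟨fun h => lt_of_le_of_ne h hz.symm, le_of_lt⟩
  rw [← setLIntegral_congr e, lintegral_inter_add_sdiff _ _ (meas_sumS measurableSet_Iio)]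
  simp

/-- the invariant density -/
noncomputable def Dn (p : Sta d) : ENNReal := RR Set.univ id p.1 p.2

theorem meas_RR {S : Set ℝ} (t b : Fin (d + 1) → Fin (d + 1)) : Measurable (RR S t b) := by
  unfold RR
  have m : Measurable (fun p : (Fin (d + 1) → ℝ) × (Fin (d + 1) → ℝ) => ew (hh t b p.2) p.1) := by
    unfold ew hh ps
    fun_prop
  exact m.lintegral_prod_right'

theorem meas_Dn : Measurable (Dn (d := d)) :=
  measurable_from_prod_countable_right fun π => meas_RR id π

/-- sign of the total sum -/
def Sc (c : Bool) : Set ℝ := cond c (Set.Iio 0) (Set.Ioi 0)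

theorem Dn_Bm (hd : 0 < d) (c : Bool) {π : Fin (d + 1) → Fin (d + 1)} (h : Good π) (y : Fin (d + 1) → ℝ) :
    Dn (π, Bm c π y) = RR (Sc c) id (st c π) y := by
  cases c
  · have h1 : RR Set.univ π id (tv (kk π) (Fin.last d) (y ∘ (sgB (kk π)).symm)) = _ :=
      RR_step hd h.1.1 Function.injective_id (kk_spec h) rfl (kk_ne hd h) _
    change RR Set.univ id π (tv (kk π) (Fin.last d) (y ∘ (sgB (kk π)).symm)) = RR (Set.Ioi 0) id (rauzyB d π) y
    rw [RR_swap, Set.preimage_univ, h1, RR_swap]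
    have h2 : (Neg.neg ⁻¹' Set.Iio (0 : ℝ)) = Set.Ioi 0 := by ext; simp
    have h3 : insA id (kk π) = (sgB (kk π)).symm := rfl
    rw [h2, h3, rauzyB_eq]
    rw [← RR_perm (Set.Ioi 0) _ π (sgB (kk π)) (y ∘ _)]
    congr 1
    · funext i; simp
    · funext i; simp
  · exact RR_step hd Function.injective_id h.1.1 rfl (kk_spec h) (kk_ne hd h).symm _

theorem Bm_smul (c : Bool) (π : Fin (d + 1) → Fin (d + 1)) (s : ℝ) (y : Fin (d + 1) → ℝ) :
    Bm c π (s • y) = s • Bm c π y := by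
  funext i
  simp only [Bm, tv, Function.update_apply, Pi.smul_apply, Function.comp, smul_eq_mul]
  split_ifs <;> ring

theorem ps_smul (t : Fin (d + 1) → Fin (d + 1)) (s : ℝ) (z : Fin (d + 1) → ℝ) (i) :
    ps t (s • z) i = s * ps t z i := by
  simp only [ps, Pi.smul_apply, smul_eq_mul, Finset.mul_sum]
  apply Finset.sum_congr rfl
  intro j _; ring

theorem meas_TT (t b : Fin (d + 1) → Fin (d + 1)) : MeasurableSet (TT t b) := (open_TT t b).measurableSet

theorem Dn_eq (π : Fin (d + 1) → Fin (d + 1)) (x : Fin (d + 1) → ℝ) :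
    Dn (π, x) = ∫⁻ z in TT id π, ew (hh id π z) x := by
  unfold Dn RR
  simp

theorem Dn_hom (π : Fin (d + 1) → Fin (d + 1)) (x : Fin (d + 1) → ℝ) {s : ℝ} (hs : 0 < s) :
    Dn (π, s • x) = ENNReal.ofReal ((s ^ (d + 1))⁻¹) * Dn (π, x) := by
  have hm : Measurable ((TT id π).indicator fun z => ew (hh id π z) x) := by
    apply Measurable.indicator _ (meas_TT _ _)
    unfold ew hh ps
    fun_prop
  rw [Dn_eq, Dn_eq, ← lintegral_indicator (meas_TT _ _), ← lintegral_indicator (meas_TT _ _),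
    lint_smul _ hm hs, ← mul_assoc, ← ENNReal.ofReal_mul (by positivity), inv_mul_cancel₀ (by positivity),
    ENNReal.ofReal_one, one_mul]
  apply lintegral_congr
  intro z
  have hc : s • z ∈ TT id π ↔ z ∈ TT id π := by
    have hn : ∀ r : ℝ, s * r < 0 ↔ r < 0 := fun r =>
      ⟨fun h => by by_contra h'; nlinarith [mul_nonneg hs.le (not_lt.1 h')], fun h => mul_neg_of_pos_of_neg hs h⟩
    simp only [TT, Set.mem_ofPred_eq, ps_smul, mul_pos_iff_of_pos_left hs, hn]
  by_cases hz : z ∈ TT id π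
  · rw [Set.indicator_of_mem hz, Set.indicator_of_mem (hc.2 hz)]
    unfold ew
    congr 3
    apply Finset.sum_congr rfl
    intro i _
    simp only [hh, ps_smul, Pi.smul_apply, smul_eq_mul]
    ring
  · rw [Set.indicator_of_notMem hz, Set.indicator_of_notMem (fun h => hz (hc.1 h))]

theorem ps_next {t : Fin (d + 1) → Fin (d + 1)} (ht : Function.Bijective t) {i : Fin (d + 1)}
    (hi : t i ≠ Fin.last d) (z : Fin (d + 1) → ℝ) : ∃ k, ps t z k = ps t z i + z i := by
  obtain ⟨k, hk⟩ := ht.2 (t i + 1)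
  refine ⟨k, ?_⟩
  have e : ∀ j, (if t j < t k then (1 : ℝ) else 0) * z j =
      (if t j < t i then (1 : ℝ) else 0) * z j + (if j = i then z i else 0) := by
    intro j
    have h1 := add_one_val hi
    have hinj : (t j : ℕ) = t i → j = i := fun h => ht.1 (Fin.ext h)
    rw [hk]
    simp only [Fin.lt_def, h1]
    by_cases hji : j = i
    · subst hji; simp
    · have h3 : (t j : ℕ) ≠ t i := fun h => hji (hinj h)
      have h2 : ((t j : ℕ) < t i + 1) ↔ ((t j : ℕ) < t i) := by omega
      simp only [h2, hji, if_false, add_zero]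
  rw [ps, Finset.sum_congr rfl fun j _ => e j, Finset.sum_add_distrib, Finset.sum_ite_eq' Finset.univ i]
  simp [ps]

theorem ps_zero {t : Fin (d + 1) → Fin (d + 1)} {i} (h : t i = 0) (z : Fin (d + 1) → ℝ) : ps t z i = 0 := by
  apply Finset.sum_eq_zero
  intro j _
  rw [if_neg, zero_mul]
  rw [h]; exact not_lt.2 (Fin.zero_le _)

theorem TT_bound (hd : 0 < d) {π : Fin (d + 1) → Fin (d + 1)} (h : Good π) {z : Fin (d + 1) → ℝ}
    (hz : z ∈ TT id π) : (∀ i, 0 ≤ hh id π z i) ∧ ∀ i, |z i| ≤ ∑ k, hh id π z k := by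
  have h1 : ∀ i, 0 ≤ ps id z i := fun i => by
    by_cases hi : i = 0
    · exact (ps_zero (t := id) hi z).ge
    · exact (hz.1 i hi).le
  have h2 : ∀ i, ps π z i ≤ 0 := fun i => by
    by_cases hi : π i = 0
    · exact (ps_zero hi z).le
    · exact (hz.2 i hi).le
  have h3 : ∀ i, 0 ≤ hh id π z i := fun i => by
    have := h1 i; have := h2 i; unfold hh; linarith
  have h4 : ∀ i, hh id π z i ≤ ∑ k, hh id π z k := fun i =>
    Finset.single_le_sum (fun k _ => h3 k) (Finset.mem_univ i)
  have h5 : ∀ i, ps id z i ≤ ∑ k, hh id π z k := fun i => by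
    have := h2 i; have h := h4 i; unfold hh at h ⊢; linarith
  have h6 : ∀ i, -∑ k, hh id π z k ≤ ps π z i := fun i => by
    have := h1 i; have h := h4 i; unfold hh at h ⊢; linarith
  refine ⟨h3, fun i => ?_⟩
  rw [abs_le]
  by_cases hi : i = Fin.last d
  · have hne : π i ≠ Fin.last d := by rw [hi]; exact pi_last_ne hd h
    obtain ⟨k, hk⟩ := ps_next h.1 hne z
    have := h2 k; have := h2 i; have := h6 k; have := h6 i
    constructor <;> linarith
  · obtain ⟨k, hk⟩ := ps_next (t := id) Function.bijective_id hi z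
    have := h1 k; have := h1 i; have := h5 k; have := h5 i
    constructor <;> linarith

theorem int_exp_abs {c : ℝ} (hc : 0 < c) : Integrable (fun t : ℝ => Real.exp (-(c * |t|))) := by
  rw [← integrableOn_univ, ← Set.Iic_union_Ioi (a := (0 : ℝ))]
  refine IntegrableOn.union ?_ ?_
  · refine (integrableOn_exp_mul_Iic hc 0).congr_fun (fun t ht => ?_) measurableSet_Iic
    rw [abs_of_nonpos ht]; simp
  · refine (integrableOn_exp_mul_Ioi (neg_neg_of_pos hc) 0).congr_fun (fun t ht => ?_) measurableSet_Ioi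
    rw [abs_of_pos ht]; simp

theorem Dn_fin (hd : 0 < d) {π : Fin (d + 1) → Fin (d + 1)} (h : Good π) {x : Fin (d + 1) → ℝ}
    (hx : x ∈ cone d) : Dn (π, x) ≠ ⊤ := by
  rw [Dn_eq]
  obtain ⟨k, -, hk⟩ := Finset.exists_min_image Finset.univ x ⟨0, Finset.mem_univ _⟩
  set c := x k / (d + 1) with hc
  have hc0 : 0 < c := div_pos (hx k) (by positivity)
  have hint : Integrable (fun z : Fin (d + 1) → ℝ => ∏ i, Real.exp (-(c * |z i|))) :=
    Integrable.fintype_prod (fun i => int_exp_abs hc0)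
  refine ne_top_of_le_ne_top (b := ∫⁻ z : Fin (d + 1) → ℝ, ENNReal.ofReal (∏ i, Real.exp (-(c * |z i|)))) ?_ ?_
  · rw [← ofReal_integral_eq_lintegral_ofReal hint]
    · exact ENNReal.ofReal_ne_top
    · exact Filter.Eventually.of_forall fun z => Finset.prod_nonneg fun i _ => (Real.exp_pos _).le
  · refine le_trans (setLIntegral_mono' (meas_TT _ _) fun z hz => ?_) (setLIntegral_le_lintegral _ _)
    obtain ⟨h1, h2⟩ := TT_bound hd h hz
    unfold ew
    apply ENNReal.ofReal_le_ofReal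
    rw [← Real.exp_sum, Real.exp_le_exp, Finset.sum_neg_distrib, neg_le_neg_iff]
    calc ∑ i, c * |z i| ≤ ∑ _i : Fin (d + 1), c * ∑ k, hh id π z k :=
          Finset.sum_le_sum fun i _ => mul_le_mul_of_nonneg_left (h2 i) hc0.le
      _ = x k * ∑ j, hh id π z j := by
          rw [Finset.sum_const, Finset.card_univ, Fintype.card_fin, nsmul_eq_mul, hc]
          push_cast
          field_simp
      _ ≤ ∑ i, hh id π z i * x i := by
          rw [Finset.mul_sum]
          apply Finset.sum_le_sum
          intro i _
          rw [mul_comm]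
          exact mul_le_mul_of_nonneg_left (hk i (Finset.mem_univ i)) (h1 i)

theorem Dn_pos_star {π : Fin (d + 1) → Fin (d + 1)} (h : Good π) (hs : π (Fin.last d) = 0)
    (x : Fin (d + 1) → ℝ) : Dn (π, x) ≠ 0 := by
  rw [Dn_eq, ← pos_iff_ne_zero]
  have hm : Measurable (fun z : Fin (d + 1) → ℝ => ew (hh id π z) x) := by
    unfold ew hh ps
    fun_prop
  rw [setLIntegral_pos_iff hm]
  have hsup : Function.support (fun z : Fin (d + 1) → ℝ => ew (hh id π z) x) = Set.univ := by
    ext z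
    simp only [Function.mem_support, Set.mem_univ, iff_true, ew, ne_eq, ENNReal.ofReal_eq_zero, not_le]
    exact Real.exp_pos _
  rw [hsup, Set.univ_inter]
  refine (open_TT _ _).measure_pos _ ⟨fun i => if i = Fin.last d then -((d : ℝ) + 1) else 1, fun i hi => ?_, fun i hi => ?_⟩
  · unfold ps
    have hnn : ∀ j ∈ Finset.univ, (0 : ℝ) ≤ (if (id j : Fin (d + 1)) < id i then (1 : ℝ) else 0) *
        (if j = Fin.last d then -((d : ℝ) + 1) else 1) := by
      intro j _
      by_cases hj : j < i
      · have : j ≠ Fin.last d := fun h => absurd (Fin.le_last i) (not_le.2 (h ▸ hj))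
        simp [hj, this]
      · simp [hj]
    refine Finset.sum_pos' hnn ⟨0, Finset.mem_univ _, ?_⟩
    have h0 : (0 : Fin (d + 1)) < i := Fin.pos_iff_ne_zero.2 hi
    have : (0 : Fin (d + 1)) ≠ Fin.last d := fun h => absurd (Fin.le_last i) (not_le.2 (h ▸ h0))
    simp [h0, this]
  · unfold ps
    have hil : i ≠ Fin.last d := fun h => hi (h ▸ hs)
    rw [← Finset.add_sum_erase _ _ (Finset.mem_univ (Fin.last d))]
    have hb : ∑ j ∈ Finset.univ.erase (Fin.last d), (if π j < π i then (1 : ℝ) else 0) *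
        (if j = Fin.last d then -((d : ℝ) + 1) else 1) ≤ ∑ j ∈ Finset.univ.erase (Fin.last d), 1 := by
      apply Finset.sum_le_sum
      intro j hj
      rw [if_neg (Finset.ne_of_mem_erase hj)]
      split_ifs <;> norm_num
    rw [Finset.sum_const, Finset.card_erase_of_mem (Finset.mem_univ _), Finset.card_univ, Fintype.card_fin] at hb
    have h0 : π (Fin.last d) < π i := by rw [hs]; exact Fin.pos_iff_ne_zero.2 hi
    rw [if_pos h0]
    beta_reduce
    rw [if_pos rfl]
    simp only [Nat.add_sub_cancel, nsmul_eq_mul, mul_one] at hb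
    linarith

theorem Dn_pos (hd : 0 < d) (h0 : Good π₀) {π : Fin (d + 1) → Fin (d + 1)} (hm : MemRauzyClass d π₀ π) :
    ∀ x, Dn (π, x) ≠ 0 := by
  obtain ⟨σ, hσ, hs⟩ := exists_star hd h0
  have hg := mem_good hd h0 hσ
  have hr : Rch σ π := (rch_symm hd h0 (rch_of_mem hσ)).1.trans (rch_of_mem hm)
  clear hm
  induction hr with
  | refl => exact Dn_pos_star hg hs
  | @tail a b hab e ih =>
    obtain ⟨c, rfl⟩ := e
    intro x
    have hga := (rch_symm hd hg hab).2
    have h1 := ih (Bm c a x)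
    rw [Dn_Bm hd c hga] at h1
    intro h2
    apply h1
    change RR Set.univ id (st c a) x = 0 at h2
    rw [RR_split, add_eq_zero] at h2
    cases c
    · exact h2.2
    · exact h2.1

end VM

namespace VM
variable {d : ℕ} {π₀ : Fin (d + 1) → Fin (d + 1)}

theorem ae_ref : ∀ᵐ p ∂(rauzyRefMeasure d π₀), MemRauzyClass d π₀ p.1 ∧ p.2 ∈ openSimplex d := by
  have hms : MeasurableSet ({π | MemRauzyClass d π₀ π} ×ˢ openSimplex d) :=
    (Set.to_countable _).measurableSet.prod meas_simplex
  exact ae_restrict_mem hms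

theorem ref_fin : IsFiniteMeasure (rauzyRefMeasure d π₀) := by
  constructor
  rw [← lintegral_one, ref_lint measurable_const]
  rw [lt_top_iff_ne_top]
  apply (ENNReal.sum_lt_top.2 _).ne
  intro π _
  rw [lt_top_iff_ne_top]
  intro h
  have h1 := U_ones (d := d) (f := fun _ => 1) measurable_const π
  rw [h, ENNReal.mul_top] at h1
  · have h2 : U (fun _ => 1) ((π, fun _ => 1) : Sta d) ≤ 1 :=
      U_le (fun _ => le_rfl) (fun _ => one_pos)
    rw [h1] at h2
    simp at h2
  · rw [ne_eq, ENNReal.ofReal_eq_zero, not_le]; positivity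

theorem step_int (hd : 0 < d) {π : Fin (d + 1) → Fin (d + 1)} (h : Good π)
    {f : Sta d → ENNReal} (hf : Measurable f) :
    ∫⁻ w, f (rauzyInduction d (π, w)) * Dn (π, w) ∂(sig d) =
      (∫⁻ w, f (st true π, w) * RR (Sc true) id (st true π) w ∂(sig d)) +
      ∫⁻ w, f (st false π, w) * RR (Sc false) id (st false π) w ∂(sig d) := by
  have hfac : ENNReal.ofReal (d.factorial : ℝ) ≠ 0 := by
    rw [ne_eq, ENNReal.ofReal_eq_zero, not_le]; positivity
  have hp : ∀ π : Fin (d + 1) → Fin (d + 1), Measurable (fun w : Fin (d + 1) → ℝ => ((π, w) : Sta d)) :=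
    fun π => measurable_const.prodMk measurable_id
  have key : ∀ c, ∫⁻ y in cone d, f (st c π, nrm y) * (Dn (π, Bm c π y) *
      ENNReal.ofReal ((∑ i, (1 : ℝ) * Bm c π y i) ^ (d + 1) * Real.exp (-∑ i, (1 : ℝ) * Bm c π y i))) =
      ENNReal.ofReal d.factorial * ∫⁻ w, f (st c π, w) * RR (Sc c) id (st c π) w ∂(sig d) := by
    intro c
    have e : ∀ y, ∑ i, (1 : ℝ) * Bm c π y i = ∑ i, qn c (π, fun _ => 1) i * y i := fun y =>
      sum_Bm c π (fun _ => 1) y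
    simp_rw [e, Dn_Bm hd c h]
    refine hom_polar (F := fun w => f (st c π, w)) (ρ := RR (Sc c) id (st c π))
      (hf.comp (hp _)) (meas_RR _ _) ?_ (qn_pos c (s := (π, fun _ => 1)) fun _ => one_pos)
    intro x _ s hs
    rw [← Dn_Bm hd c h, ← Dn_Bm hd c h, Bm_smul, Dn_hom _ _ hs]
  have h1 := hom_polar (F := fun w => f (rauzyInduction d (π, w))) (ρ := fun w => Dn (π, w))
    (hf.comp (meas_P.comp (hp _))) (meas_Dn.comp (hp _)) (fun x _ s hs => Dn_hom π x hs)
    (q := fun _ => 1) (fun _ => one_pos)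
  have h2 := CV hd h f (fun x => Dn (π, x) *
      ENNReal.ofReal ((∑ i, (1 : ℝ) * x i) ^ (d + 1) * Real.exp (-∑ i, (1 : ℝ) * x i)))
  beta_reduce at h2
  rw [key, key, ← mul_add] at h2
  have h3 := h1.symm.trans h2
  exact (ENNReal.mul_right_inj hfac ENNReal.ofReal_ne_top).1 h3

theorem sum_st (hd : 0 < d) (h0 : Good π₀) (c : Bool) (g : (Fin (d + 1) → Fin (d + 1)) → ENNReal) :
    ∑ π ∈ Rc π₀, g (st c π) = ∑ π ∈ Rc π₀, g π := by
  classical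
  have hinj : Set.InjOn (st c) (Rc π₀ : Set (Fin (d + 1) → Fin (d + 1))) := fun a ha b hb e =>
    st_injOn c (mem_good hd h0 (mem_Rc.1 ha)) (mem_good hd h0 (mem_Rc.1 hb)) e
  have him : (Rc π₀).image (st c) = Rc π₀ := by
    apply Finset.eq_of_subset_of_card_le
    · intro x hx
      obtain ⟨a, ha, rfl⟩ := Finset.mem_image.1 hx
      exact mem_Rc.2 (mem_st c (mem_Rc.1 ha))
    · rw [Finset.card_image_of_injOn hinj]
  rw [← Finset.sum_image hinj, him]

theorem inv_int (hd : 0 < d) (h0 : Good π₀) {f : Sta d → ENNReal} (hf : Measurable f) :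
    ∫⁻ p, f (rauzyInduction d p) * Dn p ∂(rauzyRefMeasure d π₀) =
      ∫⁻ p, f p * Dn p ∂(rauzyRefMeasure d π₀) := by
  have e1 := ref_lint (π₀ := π₀) (f := fun p => f (rauzyInduction d p) * Dn p) ((hf.comp meas_P).mul meas_Dn)
  have e2 := ref_lint (π₀ := π₀) (f := fun p => f p * Dn p) (hf.mul meas_Dn)
  refine e1.trans (Eq.trans ?_ e2.symm)
  rw [Finset.sum_congr rfl fun π hπ => step_int hd (mem_good hd h0 (mem_Rc.1 hπ)) hf]
  rw [Finset.sum_add_distrib,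
    sum_st hd h0 true (fun π => ∫⁻ w, f (π, w) * RR (Sc true) id π w ∂(sig d)),
    sum_st hd h0 false (fun π => ∫⁻ w, f (π, w) * RR (Sc false) id π w ∂(sig d)),
    ← Finset.sum_add_distrib]
  apply Finset.sum_congr rfl
  intro π _
  have hp : Measurable (fun w : Fin (d + 1) → ℝ => ((π, w) : Sta d)) := measurable_const.prodMk measurable_id
  have hm : Measurable (fun w => f (π, w) * RR (Sc true) id π w) := (hf.comp hp).mul (meas_RR _ _)
  rw [← lintegral_add_left hm]
  apply lintegral_congr
  intro w
  rw [← mul_add]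
  congr 1
  exact (RR_split id π w).symm

/-- the invariant measure -/
noncomputable def mu (π₀ : Fin (d + 1) → Fin (d + 1)) : Measure (Sta d) :=
  (rauzyRefMeasure d π₀).withDensity Dn

theorem mu_mp (hd : 0 < d) (h0 : Good π₀) : MeasurePreserving (rauzyInduction d) (mu π₀) (mu π₀) := by
  refine ⟨meas_P, ?_⟩
  ext A hA
  rw [Measure.map_apply meas_P hA, mu, withDensity_apply _ (meas_P hA), withDensity_apply _ hA,
    ← lintegral_indicator (meas_P hA), ← lintegral_indicator hA]
  have h := inv_int hd h0 (meas_ind hA)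
  convert h using 2
  · funext p
    by_cases hp : rauzyInduction d p ∈ A
    · rw [Set.indicator_of_mem (show p ∈ rauzyInduction d ⁻¹' A from hp)]; simp [ind, hp]
    · rw [Set.indicator_of_notMem (show p ∉ rauzyInduction d ⁻¹' A from hp)]; simp [ind, hp]
  · funext p
    by_cases hp : p ∈ A <;> simp [ind, hp]

theorem main_pos (hd : 0 < d) (h0 : Good π₀) :
    ∃ μR : Measure ((Fin (d + 1) → Fin (d + 1)) × (Fin (d + 1) → ℝ)),
      SigmaFinite μR ∧ μR ≪ rauzyRefMeasure d π₀ ∧ rauzyRefMeasure d π₀ ≪ μR ∧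
        Conservative (rauzyInduction d) μR ∧ Ergodic (rauzyInduction d) μR := by
  have := ref_fin (π₀ := π₀)
  have hac : mu π₀ ≪ rauzyRefMeasure d π₀ := withDensity_absolutelyContinuous _ _
  have hac' : rauzyRefMeasure d π₀ ≪ mu π₀ := by
    refine withDensity_absolutelyContinuous' meas_Dn.aemeasurable ?_
    filter_upwards [ae_ref (π₀ := π₀)] with p hp
    exact Dn_pos hd h0 hp.1 p.2
  have hmp := mu_mp hd h0
  refine ⟨mu π₀, ?_, hac, hac', ⟨hmp.quasiMeasurePreserving, ?_⟩, hmp, ⟨?_⟩⟩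
  · refine SigmaFinite.withDensity_of_ne_top ?_
    filter_upwards [ae_ref (π₀ := π₀)] with p hp
    exact Dn_fin hd (mem_good hd h0 hp.1) hp.2.1
  · intro W hW hpos
    exact recur hd h0 hW fun h => hpos (hac h)
  · intro E hE hinv
    rw [Filter.eventuallyConst_set']
    rcases erg hd h0 hE hinv with h | h
    · left; exact ae_eq_empty.2 (hac h)
    · right; exact ae_eq_univ.2 (hac h)

theorem main_zero (π₀ : Fin (0 + 1) → Fin (0 + 1)) :
    ∃ μR : Measure ((Fin (0 + 1) → Fin (0 + 1)) × (Fin (0 + 1) → ℝ)),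
      SigmaFinite μR ∧ μR ≪ rauzyRefMeasure 0 π₀ ∧ rauzyRefMeasure 0 π₀ ≪ μR ∧
        Conservative (rauzyInduction 0) μR ∧ Ergodic (rauzyInduction 0) μR := by
  have := ref_fin (π₀ := π₀)
  have hid : rauzyInduction 0 = id := by
    funext p
    have hk : Function.invFun p.1 (Fin.last 0) = Fin.last 0 := Subsingleton.elim (α := Fin 1) _ _
    unfold rauzyInduction
    simp only [hk, lt_irrefl, if_false, id]
  rw [hid]
  refine ⟨rauzyRefMeasure 0 π₀, inferInstance, .rfl, .rfl, Conservative.id _, MeasurePreserving.id _, ⟨?_⟩⟩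
  intro E hE _
  have hae : ∀ᵐ p ∂(rauzyRefMeasure 0 π₀), p = (π₀, fun _ => 1) := by
    filter_upwards [ae_ref (π₀ := π₀)] with p hp
    refine Prod.ext (funext fun i => Subsingleton.elim (α := Fin 1) _ _) (funext fun i => ?_)
    have := hp.2.2
    rw [Fin.sum_univ_one] at this
    rw [← this]
    exact congrArg p.2 (Subsingleton.elim (α := Fin 1) _ _)
  rw [Filter.eventuallyConst_set]
  by_cases h : ((π₀, fun _ => 1) : Sta 0) ∈ E
  · left; filter_upwards [hae] with p hp; rw [hp]; exact h
  · right; filter_upwards [hae] with p hp; rw [hp]; exact h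

end VM

/-- **(Veech, Masur, 1982).**  For every Rauzy class `ℛ` there is a `σ`-finite measure on
`ℛ × Δ_{m-1}` invariant under the normalized Rauzy induction map `𝒫`, equivalent to
(counting) × (Lebesgue) measure, conservative and ergodic. -/
theorem veech_masur (d : ℕ) (π₀ : Fin (d + 1) → Fin (d + 1))
    (hbij : Function.Bijective π₀) (hirr : IsIrreduciblePerm d π₀) :
    ∃ μR : Measure ((Fin (d + 1) → Fin (d + 1)) × (Fin (d + 1) → ℝ)),
      SigmaFinite μR ∧ μR ≪ rauzyRefMeasure d π₀ ∧ rauzyRefMeasure d π₀ ≪ μR ∧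
      Conservative (rauzyInduction d) μR ∧ Ergodic (rauzyInduction d) μR := by
  rcases Nat.eq_zero_or_pos d with rfl | hd
  · exact VM.main_zero π₀
  · exact VM.main_pos hd ⟨hbij, hirr⟩
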